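/- Let μ be a T-invariant and shift-ergodic probability measure on X_λ (0 < λ < 1/2), and let (v_k)_{k≥1} be the deterministic asymptotic speeds of tagged k-solitons, v_k = lim_{t→∞} x(γ^t)/t μ-a.s. Then for every k with ρ_k > 0, the speed satisfies v_k ≤ w_0 / ρ_k; in particular each v_k is finite. -/

import Mathlib

open MeasureTheory Filter Finset

/-- A ball configuration: a box at each integer, occupied (`true`) or empty (`false`). -/
abbrev Cfg := ℤ → Bool

/-- Numerical (integer) value of a box. -/
def valZ (b : Bool) : ℤ := if b then 1 else 0

/-- Numerical (real) value of a box. -/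
def valR (b : Bool) : ℝ := if b then 1 else 0

/-- `x` is a record of the configuration `η`:
for every `z ≤ x`, the number of balls in `[z,x]` is strictly smaller than the
number of empty boxes in `[z,x]`. -/
def isRecord (η : Cfg) (x : ℤ) : Prop :=
  ∀ z ≤ x, (∑ y ∈ Finset.Icc z x, valZ (η y)) < ∑ y ∈ Finset.Icc z x, (1 - valZ (η y))

open Classical in
/-- The box-ball (Takahashi–Satsuma) operator `T`. -/
noncomputable def bbsT (η : Cfg) : Cfg := fun x => if isRecord η x then false else !(η x)

/-- `η` has asymptotic density `lam` of balls on both half lines. -/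
def inXlam (lam : ℝ) (η : Cfg) : Prop :=
  Tendsto (fun y : ℕ => (∑ x ∈ Finset.Icc (-(y : ℤ)) 0, valR (η x)) / (y : ℝ))
    atTop (nhds lam) ∧
  Tendsto (fun y : ℕ => (∑ x ∈ Finset.Icc (0 : ℤ) (y : ℤ), valR (η x)) / (y : ℝ))
    atTop (nhds lam)

/-- `η ∈ 𝒳`: it has a well-defined density `0 < lam < 1/2`. -/
def inX (η : Cfg) : Prop := ∃ lam : ℝ, 0 < lam ∧ lam < 1 / 2 ∧ inXlam lam η

/-- `ξ` is a walk lift of the configuration `η`. -/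
def IsLift (η : Cfg) (ξ : ℤ → ℤ) : Prop :=
  ∀ x : ℤ, ξ x - ξ (x - 1) = 2 * valZ (η x) - 1

/-- Running minimum `min_{y ≤ x} ξ(y)` of a walk. -/
noncomputable def runMin (ξ : ℤ → ℤ) (x : ℤ) : ℤ := sInf (ξ '' Set.Iic x)

/-- The box-ball operator on walks: reflection at the running minimum. -/
noncomputable def liftT (ξ : ℤ → ℤ) : ℤ → ℤ := fun x => 2 * runMin ξ x - ξ x

/-- The canonical walk lift of `η` with value `0` at the origin. -/
noncomputable def xi0 (η : Cfg) : ℤ → ℤ := fun x =>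
  if 0 ≤ x then ∑ y ∈ Finset.Icc 1 x, (2 * valZ (η y) - 1)
  else -∑ y ∈ Finset.Icc (x + 1) 0, (2 * valZ (η y) - 1)
/-- Maximal runs of a word of (position, letter) pairs. -/
def runsOf : List (ℤ × Bool) → List (List (ℤ × Bool))
  | [] => []
  | a :: l =>
    match runsOf l with
    | [] => [[a]]
    | r :: rs =>
      if (r.head?.map Prod.snd) = some a.2 then (a :: r) :: rs else [a] :: r :: rs

/-- Takahashi–Satsuma step: find the leftmost run whose length is at least the
length of the run preceding it; the soliton consists of the preceding run
together with the first (that many) letters of the selected run. -/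
def findSoliton : List (List (ℤ × Bool)) → Option (List (ℤ × Bool))
  | r1 :: r2 :: rest =>
    if r1.length ≤ r2.length then some (r1 ++ r2.take r1.length)
    else findSoliton (r2 :: rest)
  | _ => none

/-- Iterated Takahashi–Satsuma algorithm (with fuel): repeatedly identify the
soliton given by `findSoliton` and remove its letters from the word. -/
def tsAux : ℕ → List (ℤ × Bool) → List (List (ℤ × Bool))
  | 0, _ => []
  | fuel + 1, w =>
    match findSoliton (runsOf w) with
    | none => []
    | some s => s :: tsAux fuel (w.filter (fun a => !((s.map Prod.fst).contains a.1)))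

/-- The solitons identified by the Takahashi–Satsuma algorithm in a finite word. -/
def tsSolitons (w : List (ℤ × Bool)) : List (List (ℤ × Bool)) := tsAux w.length w

/-- The word (with positions) strictly between sites `y1` and `y2`. -/
def excursionWord (η : Cfg) (y1 y2 : ℤ) : List (ℤ × Bool) :=
  (List.range (y2 - y1 - 1).toNat).map fun n => (y1 + 1 + n, η (y1 + 1 + n))

/-- `Γ_k η`: the set of `k`-solitons of `η`, each identified with the set of `2k`
sites it occupies.  A `k`-soliton is obtained by applying the Takahashi–Satsuma
algorithm to an excursion of `η` (the word between two consecutive records). -/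
def Gamma (η : Cfg) (k : ℕ) : Set (Finset ℤ) :=
  {γ | ∃ y1 y2 : ℤ, y1 < y2 ∧ isRecord η y1 ∧ isRecord η y2 ∧
    (∀ z : ℤ, y1 < z → z < y2 → ¬ isRecord η z) ∧
    ∃ s ∈ tsSolitons (excursionWord η y1 y2), s.length = 2 * k ∧
      γ = (s.map Prod.fst).toFinset}

/-- The head of a soliton `γ` of `η`: the positions of its ones. -/
def headF (η : Cfg) (γ : Finset ℤ) : Finset ℤ := γ.filter fun x => η x = true

/-- The tail of a soliton `γ` of `η`: the positions of its zeros. -/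
def tailF (η : Cfg) (γ : Finset ℤ) : Finset ℤ := γ.filter fun x => η x = false
/-- `x` is a `k`-slot of `η`: either a record, or the `j`-th smallest site of the
tail or of the head of some soliton, with `j > k` (slot level `j - 1 ≥ k`). -/
def IsKSlot (η : Cfg) (k : ℕ) (x : ℤ) : Prop :=
  isRecord η x ∨ ∃ m : ℕ, ∃ γ ∈ Gamma η m,
    (x ∈ tailF η γ ∧ k < ((tailF η γ).filter fun y => y ≤ x).card) ∨
    (x ∈ headF η γ ∧ k < ((headF η γ).filter fun y => y ≤ x).card)

open Classical in
/-- Increasing enumeration of a (doubly unbounded, locally finite) set `S ⊆ ℤ`,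
normalized so that the `0`-th element is the base point `b`.  (Junk value if no
such enumeration exists.) -/
noncomputable def enumZ (S : Set ℤ) (b : ℤ) : ℤ → ℤ :=
  if h : ∃ f : ℤ → ℤ, StrictMono f ∧ f 0 = b ∧ Set.range f = S then h.choose
  else fun _ => 0

/-- Position `r(ξ,j)` of Record `j` of a walk `ξ`: leftmost site where `ξ` takes
the value `-j`. -/
noncomputable def recPos (ξ : ℤ → ℤ) (j : ℤ) : ℤ := sInf {x : ℤ | ξ x = -j}

/-- `s_k(ξ,i)`: the `i`-th `k`-slot of the configuration `η` lifted by the walk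
`ξ`, enumerated increasingly and normalized by `s_k(ξ,0) = r(ξ,0)`. -/
noncomputable def skEnum (η : Cfg) (ξ : ℤ → ℤ) (k : ℕ) : ℤ → ℤ :=
  enumZ {x : ℤ | IsKSlot η k x} (recPos ξ 0)

/-- `M_k ξ (i)`: the number of `k`-solitons appended to the `i`-th `k`-slot,
i.e. contained in `[s_k(ξ,i)+1, s_k(ξ,i+1)-1]`. -/
noncomputable def Mk (η : Cfg) (ξ : ℤ → ℤ) (k : ℕ) (i : ℤ) : ℕ :=
  Set.ncard {γ | γ ∈ Gamma η k ∧
    ∀ x ∈ γ, skEnum η ξ k i < x ∧ x < skEnum η ξ k (i + 1)}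

open Classical in
/-- The trajectory `γ^t` of a tagged `k`-soliton `γ` of `η`: `γ^0 = γ` and
`γ^{t+1}` is the `k`-soliton of `T^{t+1} η` whose head is the tail of `γ^t`. -/
noncomputable def solTraj (η : Cfg) (k : ℕ) (γ : Finset ℤ) : ℕ → Finset ℤ
  | 0 => γ
  | t + 1 =>
    if h : ∃ γ' ∈ Gamma (bbsT^[t + 1] η) k,
        headF (bbsT^[t + 1] η) γ' = tailF (bbsT^[t] η) (solTraj η k γ t)
    then h.choose else ∅

/-- `J_m^t ξ`: the flow of `m`-solitons through Record `0` by time `t`. -/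
noncomputable def Jflow (η : Cfg) (ξ : ℤ → ℤ) (m : ℕ) (t : ℕ) : ℕ :=
  Set.ncard {γ | γ ∈ Gamma η m ∧ (∀ x ∈ γ, x < recPos ξ 0) ∧
    ∀ x ∈ solTraj η m γ t, recPos (liftT^[t] ξ) 0 ≤ x}

/-- `o_k^t(ξ) = Σ_{m>k} 2(m-k)·J_m^t ξ`: the flow of `k`-slots through Record
`0` by time `t`, counted as the number of pairs (an `m`-soliton `γ` with `m > k`
crossing Record `0` by time `t`, a site of `γ` of slot level `≥ k`); each such
`γ` carries exactly `2(m-k)` such sites. -/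
noncomputable def oOff (η : Cfg) (ξ : ℤ → ℤ) (k : ℕ) (t : ℕ) : ℕ :=
  Set.ncard {p : Finset ℤ × ℤ | ∃ m : ℕ, k < m ∧ p.1 ∈ Gamma η m ∧
    (∀ x ∈ p.1, x < recPos ξ 0) ∧
    (∀ x ∈ solTraj η m p.1 t, recPos (liftT^[t] ξ) 0 ≤ x) ∧
    ((p.2 ∈ tailF η p.1 ∧ k < ((tailF η p.1).filter fun y => y ≤ p.2).card) ∨
     (p.2 ∈ headF η p.1 ∧ k < ((headF η p.1).filter fun y => y ≤ p.2).card))}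

/-- The relabeled `i`-th `k`-slot at time `t`:
`s_k^t(ξ,i) = s_k(T^t ξ, o_k^t(ξ) + i)`. -/
noncomputable def skEnumT (η : Cfg) (ξ : ℤ → ℤ) (k : ℕ) (t : ℕ) (i : ℤ) : ℤ :=
  skEnum (bbsT^[t] η) (liftT^[t] ξ) k ((oOff η ξ k t : ℤ) + i)
/-- The shift `θ` on configurations: `θη(y) = η(y+1)`. -/
def shiftC (η : Cfg) : Cfg := fun y => η (y + 1)

/-- The shift by `n`: `θ^n η (y) = η (y + n)`. -/
def shiftBy (n : ℤ) (η : Cfg) : Cfg := fun y => η (y + n)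

/-- The shift on `ℕ^ℤ` (soliton components). -/
def shiftN (z : ℤ → ℕ) : ℤ → ℕ := fun i => z (i + 1)

/-- `r(η)`: the position of the first record of `η` in `[1,∞)`. -/
noncomputable def rFirst (η : Cfg) : ℤ := sInf {x : ℤ | 1 ≤ x ∧ isRecord η x}

/-- The record-shift `θ̂ η = θ^{r(η)} η`. -/
noncomputable def thetaHat (η : Cfg) : Cfg := shiftBy (rFirst η) η

/-- The dynamics seen from a record, `T̂ η = θ^{ψ_η(0)} (Tη)` where `ψ_η(0)` is
the position of Record `0` of `Tξ` for the canonical lift `ξ = ξ°[η]`. -/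
noncomputable def That (η : Cfg) : Cfg := shiftBy (recPos (liftT (xi0 η)) 0) (bbsT η)

/-- The set `𝒳` of configurations with density in `(0,1/2)`. -/
def Xset : Set Cfg := {η | inX η}

/-- The set `𝒳̂` of configurations in `𝒳` having a record at the origin. -/
def XhatSet : Set Cfg := {η | inX η ∧ isRecord η 0}

/-- The `k`-component of a configuration (seen from its canonical lift `ξ°[η]`,
which for `η ∈ 𝒳̂` has Record `0` at the origin). -/
noncomputable def MkHat (η : Cfg) (k : ℕ) (i : ℤ) : ℕ := Mk η (xi0 η) k i

/-- `μ` is the inverse-Palm measure of `μ̂`: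
`μ(A) = μ̂(r)⁻¹ · ∫ Σ_{i=1}^{r(η)} 1_A(θ^i η) dμ̂`. -/
def PalmIdentity (muhat mu : MeasureTheory.Measure Cfg) : Prop :=
  ∀ A : Set Cfg, MeasurableSet A →
    mu A = (∫⁻ η, ((rFirst η).toNat : ENNReal) ∂muhat)⁻¹ *
      ∫⁻ η, ∑ i ∈ Finset.Icc (1 : ℤ) (rFirst η),
        A.indicator (fun _ => (1 : ENNReal)) (shiftBy i η) ∂muhat

/-- The number of `k`-solitons in the excursion of `η` between Records 0 and 1
(i.e. contained in `(0, r(η))`), for `η` with a record at the origin. -/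
noncomputable def excCount (η : Cfg) (k : ℕ) : ℕ :=
  Set.ncard {γ | γ ∈ Gamma η k ∧ ∀ x ∈ γ, 0 < x ∧ x < rFirst η}

/-- `ρ_k`: the mean number of `k`-solitons per excursion, under
`μ̂ = μ( · | 0 ∈ Rη)`. -/
noncomputable def rhoK (mu : MeasureTheory.Measure Cfg) (k : ℕ) : ℝ :=
  ∫ η, (excCount η k : ℝ) ∂(ProbabilityTheory.cond mu XhatSet)

/-- `w_0 = 1 + Σ_k 2k ρ_k`: the mean excursion length. -/
noncomputable def w0of (mu : MeasureTheory.Measure Cfg) : ℝ :=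
  1 + ∑' k : ℕ, 2 * (k : ℝ) * rhoK mu k

/-- `ρ̄_k = ρ_k / w_0`: the mean number of `k`-solitons per site. -/
noncomputable def rhoBar (mu : MeasureTheory.Measure Cfg) (k : ℕ) : ℝ :=
  rhoK mu k / w0of mu

/-- The leftmost site of a soliton. -/
noncomputable def leftmost (γ : Finset ℤ) : ℤ := sInf (γ : Set ℤ)

/-!
Let `p_k` be the probability that the origin is the leftmost site of a `k`-soliton. By mass
transport, the origin is a record with probability `1 - ∑ k, 2 k p_k`, and `ρ_k` is `p_k` divided
by that probability, so that `w_0 / ρ_k = 1 / p_k`. It remains to show `v_k p_k ≤ 1`.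

Two solitons of the same size do not interleave: one of them lies entirely to the left of the
other. Hence at each time at most one `k`-soliton has sites on both sides of the origin. Since the
head of a soliton is the tail it had one time step before, a soliton cannot pass the origin without
being, at some time, in this position. Trajectories being injective, at most `N` solitons of size
`k` pass the origin by time `N`. On average about `v_k p_k N` of them do so.
-/

/-! ### The Takahashi–Satsuma algorithm -/

/-- A finite word, each letter carrying its position. -/
abbrev Word := List (ℤ × Bool)

/-- The number of ones minus the number of zeros of a word. -/
def height (w : Word) : ℤ := (w.map fun a => 2 * valZ a.2 - 1).sum

@[simp] lemma height_nil : height [] = 0 := rfl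

lemma height_append (p q : Word) : height (p ++ q) = height p + height q := by
  simp [height]

lemma height_of_forall_eq {w : Word} {c : Bool} (h : ∀ a ∈ w, a.2 = c) :
    height w = w.length * (2 * valZ c - 1) := by
  have hw : w.map (fun a => 2 * valZ a.2 - 1) = List.replicate w.length (2 * valZ c - 1) :=
    List.map_eq_replicate_iff.2 fun a ha => by rw [h a ha]
  rw [height, hw, List.sum_replicate, nsmul_eq_mul]

lemma runsOf_eq_splitBy (w : Word) : runsOf w = w.splitBy fun a b => a.2 == b.2 := by
  induction w with
  | nil => rfl
  | cons a l ih =>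
    obtain ⟨hflat, hnil, hconst, hchain⟩ := List.splitBy_eq_iff.1 ih.symm
    symm
    rw [runsOf]
    split
    · next h =>
      have hl : l = [] := by rw [hflat, h, List.flatten_nil]
      rw [hl]
      rfl
    · next r rs h =>
      rw [h] at hflat hnil hconst hchain
      obtain ⟨b, r, rfl⟩ := List.exists_cons_of_ne_nil (l := r) (by rintro rfl; simp at hnil)
      rw [List.splitBy_eq_iff, hflat]
      split_ifs with hab
      · have hba : a.2 = b.2 := by simpa using hab.symm
        refine ⟨by simp, by simpa using hnil, ?_, ?_⟩
        · simp only [List.mem_cons, forall_eq_or_imp] at hconst ⊢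
          exact ⟨List.isChain_cons_cons.2 ⟨by simp [hba], hconst.1⟩, hconst.2⟩
        · rw [List.isChain_cons] at hchain ⊢
          refine ⟨fun q hq => ?_, hchain.2⟩
          obtain ⟨_, hne, hlast⟩ := hchain.1 q hq
          exact ⟨by simp, hne, by simpa using hlast⟩
      · have hba : a.2 ≠ b.2 := fun hba => hab (by simp [hba])
        refine ⟨by simp, by simpa using hnil, by simpa using hconst, ?_⟩
        exact List.isChain_cons_cons.2 ⟨⟨by simp, by simp, by simpa using hba⟩, hchain⟩

lemma flatten_runsOf (w : Word) : (runsOf w).flatten = w := by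
  rw [runsOf_eq_splitBy, List.flatten_splitBy]

lemma runsOf_append {p q : Word} (h : ∀ a ∈ p.getLast?, ∀ b ∈ q.head?, a.2 ≠ b.2) :
    runsOf (p ++ q) = runsOf p ++ runsOf q := by
  simp only [runsOf_eq_splitBy]
  exact List.splitBy_append fun a ha b hb => by simpa using h a ha b hb

lemma runsOf_append_of_forall_eq {r : Word} {c : Bool} (hr : r ≠ []) (hc : ∀ a ∈ r, a.2 = c)
    (t : Word) : ∃ t' rs, runsOf (r ++ t) = (r ++ t') :: rs := by
  induction r with
  | nil => exact absurd rfl hr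
  | cons a r ih =>
    rw [List.cons_append, runsOf]
    rcases eq_or_ne r [] with rfl | hne
    · rw [List.nil_append]
      rcases runsOf t with _ | ⟨q, qs⟩
      · exact ⟨[], [], rfl⟩
      · dsimp only
        split_ifs
        · exact ⟨q, qs, rfl⟩
        · exact ⟨[], q :: qs, rfl⟩
    · obtain ⟨t', rs, h⟩ := ih hne fun b hb => hc b (List.mem_cons_of_mem _ hb)
      obtain ⟨b, r, rfl⟩ := List.exists_cons_of_ne_nil hne
      refine ⟨t', rs, ?_⟩
      rw [h]
      simp [hc a (by simp), hc b (by simp)]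

lemma runsOf_of_forall_eq {r : Word} {c : Bool} (hr : r ≠ []) (hc : ∀ a ∈ r, a.2 = c) :
    runsOf r = [r] := by
  rw [runsOf_eq_splitBy]
  refine List.splitBy_of_isChain hr (List.Pairwise.isChain ?_)
  exact List.pairwise_of_forall_mem_list fun a ha b hb => by simp [hc a ha, hc b hb]

lemma runsOf_flatten_of_eq_append {w : Word} {rs rs' : List Word} (h : runsOf w = rs ++ rs') :
    runsOf rs.flatten = rs ∧ runsOf rs'.flatten = rs' := by
  simp only [runsOf_eq_splitBy] at h ⊢
  obtain ⟨-, hnil, hconst, hchain⟩ := List.splitBy_eq_iff.1 h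
  rw [List.mem_append, not_or] at hnil
  rw [List.isChain_append] at hchain
  exact ⟨List.splitBy_flatten hnil.1 (fun r hr => hconst r (List.mem_append_left _ hr)) hchain.1,
    List.splitBy_flatten hnil.2 (fun r hr => hconst r (List.mem_append_right _ hr)) hchain.2.1⟩

lemma forall_eq_of_mem_runsOf {w r : Word} (h : r ∈ runsOf w) :
    r ≠ [] ∧ ∃ c, ∀ a ∈ r, a.2 = c := by
  rw [runsOf_eq_splitBy] at h
  have hne := List.ne_nil_of_mem_splitBy h
  have hpair : (r.map Prod.snd).Pairwise (· = ·) := by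
    rw [← List.isChain_iff_pairwise, List.isChain_map]
    simpa only [beq_iff_eq] using List.isChain_of_mem_splitBy h
  obtain ⟨a, r, rfl⟩ := List.exists_cons_of_ne_nil hne
  refine ⟨hne, a.2, List.forall_mem_cons.2 ⟨rfl, fun b hb => ?_⟩⟩
  exact (List.rel_of_pairwise_cons hpair (List.mem_map_of_mem hb)).symm

lemma forall_eq_of_runsOf_eq_append {w r r' : Word} {rs rs' : List Word}
    (h : runsOf w = rs ++ r :: r' :: rs') :
    ∃ c, (∀ a ∈ r, a.2 = c) ∧ ∀ a ∈ r', a.2 = !c := by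
  obtain ⟨-, c, hc⟩ := forall_eq_of_mem_runsOf (w := w) (r := r) (by simp [h])
  obtain ⟨-, c', hc'⟩ := forall_eq_of_mem_runsOf (w := w) (r := r') (by simp [h])
  have hchain := (List.splitBy_eq_iff.1 ((runsOf_eq_splitBy w).symm.trans h)).2.2.2
  rw [List.isChain_append, List.isChain_cons_cons] at hchain
  obtain ⟨hr, hr', hne⟩ := hchain.2.1.1
  rw [hc _ (List.getLast_mem hr), hc' _ (List.head_mem hr')] at hne
  refine ⟨c, hc, fun a ha => (hc' a ha).trans ?_⟩
  cases c <;> cases c' <;> simp_all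

/-- `s` consists of `m > 0` letters `c` followed by `m` letters `!c`. -/
structure IsSolitonWord (m : ℕ) (c : Bool) (s : Word) : Prop where
  pos : 0 < m
  length_eq : s.length = 2 * m
  take_eq : ∀ a ∈ s.take m, a.2 = c
  drop_eq : ∀ a ∈ s.drop m, a.2 = !c

lemma IsSolitonWord.height_eq {m : ℕ} {c : Bool} {s : Word} (h : IsSolitonWord m c s) :
    height s = 0 := by
  rw [← List.take_append_drop m s, height_append, height_of_forall_eq h.take_eq,
    height_of_forall_eq h.drop_eq, List.length_take, List.length_drop, h.length_eq]
  cases c <;> simp [valZ] <;> omega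

lemma IsSolitonWord.exists_mem {m : ℕ} {c : Bool} {s : Word} (h : IsSolitonWord m c s)
    (b : Bool) : ∃ a ∈ s, a.2 = b := by
  have hl := h.length_eq
  have hm := h.pos
  have htake : 0 < (s.take m).length := by rw [List.length_take]; omega
  have hdrop : 0 < (s.drop m).length := by rw [List.length_drop]; omega
  obtain ⟨a, ha⟩ := List.exists_mem_of_length_pos htake
  obtain ⟨a', ha'⟩ := List.exists_mem_of_length_pos hdrop
  by_cases hb : b = c
  · exact ⟨a, List.mem_of_mem_take ha, (h.take_eq a ha).trans hb.symm⟩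
  · exact ⟨a', List.mem_of_mem_drop ha', (h.drop_eq a' ha').trans (by cases b <;> simp_all)⟩

/-- The lengths of the maximal runs of `p` are strictly decreasing and greater than `m`. -/
def DescendingRuns (m : ℕ) (p : Word) : Prop :=
  ((runsOf p).map List.length ++ [m]).Pairwise (· > ·)

/-- In the word `u ++ s ++ v`, the factor `s` is a soliton of half-length `m`, the selection of
which is triggered by the leftmost failure of the run lengths to decrease. -/
structure IsFirstSoliton (m : ℕ) (u s : Word) : Prop where
  descending : DescendingRuns m u
  solitonWord : ∃ c, IsSolitonWord m c s ∧ ∀ a ∈ u.getLast?, a.2 ≠ c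

lemma exists_eq_append_of_findSoliton_eq_some {rs : List Word} {s : Word}
    (h : findSoliton rs = some s) :
    ∃ qs r r' qs', rs = qs ++ r :: r' :: qs' ∧ s = r ++ r'.take r.length ∧
      r.length ≤ r'.length ∧ (qs.map List.length ++ [r.length]).Pairwise (· > ·) := by
  simp only [← List.isChain_iff_pairwise]
  induction rs with
  | nil => simp [findSoliton] at h
  | cons r₁ rs ih =>
    rcases rs with _ | ⟨r₂, rs⟩
    · simp [findSoliton] at h
    rw [findSoliton] at h
    split_ifs at h with hle
    · exact ⟨[], r₁, r₂, rs, rfl, (Option.some.inj h).symm, hle, by simp⟩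
    · obtain ⟨qs, r, r', qs', hrs, hs, hle', hchain⟩ := ih h
      refine ⟨r₁ :: qs, r, r', qs', by rw [hrs, List.cons_append], hs, hle', ?_⟩
      rw [List.map_cons, List.cons_append, List.isChain_cons]
      refine ⟨?_, hchain⟩
      cases qs <;> simp_all

lemma exists_isFirstSoliton_of_findSoliton_eq_some {w s : Word}
    (h : findSoliton (runsOf w) = some s) :
    ∃ m u v, w = u ++ s ++ v ∧ IsFirstSoliton m u s := by
  obtain ⟨qs, r, r', qs', hrs, rfl, hle, hdesc⟩ := exists_eq_append_of_findSoliton_eq_some h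
  obtain ⟨c, hr, hr'⟩ := forall_eq_of_runsOf_eq_append hrs
  have hne := (forall_eq_of_mem_runsOf (w := w) (r := r) (by simp [hrs])).1
  refine ⟨r.length, qs.flatten, r'.drop r.length ++ qs'.flatten, ?_, ⟨?_, c, ⟨?_, ?_, ?_, ?_⟩, ?_⟩⟩
  · rw [← flatten_runsOf w, hrs]
    simp only [List.flatten_append, List.flatten_cons, List.append_assoc]
    rw [← List.append_assoc (r'.take _), List.take_append_drop]
  · rwa [DescendingRuns, (runsOf_flatten_of_eq_append hrs).1]
  · exact List.length_pos_of_ne_nil hne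
  · simp [hle, two_mul]
  · simpa using hr
  · rw [List.drop_left]
    exact fun a ha => hr' a (List.mem_of_mem_take ha)
  · intro a ha
    rcases List.eq_nil_or_concat qs with rfl | ⟨qs, q, rfl⟩
    · simp at ha
    rw [List.concat_eq_append, List.append_assoc, List.singleton_append] at hrs
    obtain ⟨d, hq, hd⟩ := forall_eq_of_runsOf_eq_append hrs
    have hqne := (forall_eq_of_mem_runsOf (w := w) (r := q) (by simp [hrs])).1
    have haq : a ∈ q := by
      rw [List.concat_eq_append, List.flatten_append, List.flatten_singleton,
        List.getLast?_append_of_ne_nil _ hqne] at ha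
      exact List.mem_of_getLast? ha
    obtain ⟨b, hb⟩ := List.exists_mem_of_ne_nil r hne
    rw [hq a haq, ← hr b hb, hd b hb]
    cases d <;> simp

lemma height_of_runsOf_eq_cons {rs : List Word} {w r : Word} {c : Bool}
    (hw : runsOf w = r :: rs) (hr : ∀ a ∈ r, a.2 = c) :
    height w = r.length * (2 * valZ c - 1) + height rs.flatten := by
  rw [← flatten_runsOf w, hw, List.flatten_cons, height_append, height_of_forall_eq hr]

/-- An alternating sum of decreasing run lengths is positive and at most its first term. -/
lemma height_of_findSoliton_eq_none {rs : List Word} {w r : Word} {c : Bool}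
    (hw : runsOf w = r :: rs) (hr : ∀ a ∈ r, a.2 = c) (hnone : findSoliton (r :: rs) = none) :
    0 < (2 * valZ c - 1) * height w ∧ (2 * valZ c - 1) * height w ≤ r.length := by
  induction rs generalizing w r c with
  | nil =>
    have hpos : 0 < r.length :=
      List.length_pos_of_ne_nil (forall_eq_of_mem_runsOf (w := w) (by simp [hw])).1
    rw [height_of_runsOf_eq_cons hw hr]
    cases c <;> simp [valZ] <;> omega
  | cons r' rs ih =>
    obtain ⟨d, hd, hd'⟩ := forall_eq_of_runsOf_eq_append (rs := []) hw
    obtain ⟨a, ha⟩ := List.exists_mem_of_ne_nil r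
      (forall_eq_of_mem_runsOf (w := w) (by simp [hw])).1
    obtain rfl : c = d := by rw [← hr a ha, hd a ha]
    rw [findSoliton] at hnone
    split_ifs at hnone with hle
    have htail := ih (runsOf_flatten_of_eq_append (rs := [r]) hw).2 hd' hnone
    rw [height_of_runsOf_eq_cons hw hr]
    cases c <;> simp [valZ] at htail ⊢ <;> omega

lemma exists_findSoliton_eq_some {w : Word} (hw : w ≠ []) (hbal : height w = 0) :
    ∃ s, findSoliton (runsOf w) = some s := by
  rw [← Option.ne_none_iff_exists']
  intro hnone
  rcases hrs : runsOf w with _ | ⟨r, rs⟩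
  · exact hw (by rw [← flatten_runsOf w, hrs, List.flatten_nil])
  obtain ⟨-, c, hc⟩ := forall_eq_of_mem_runsOf (w := w) (r := r) (by simp [hrs])
  have := (height_of_findSoliton_eq_none hrs hc (hrs ▸ hnone)).1
  simp [hbal] at this

/-- `TSDecomp w l`: the Takahashi–Satsuma algorithm exhausts `w` by removing the words of `l` one
after the other. -/
inductive TSDecomp : Word → List Word → Prop
  | nil : TSDecomp [] []
  | cons {m : ℕ} {u s v : Word} {l : List Word} :
      IsFirstSoliton m u s → TSDecomp (u ++ v) l → TSDecomp (u ++ s ++ v) (s :: l)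

lemma filter_notMem_positions {u s v : Word} (h : ((u ++ s ++ v).map Prod.fst).Nodup) :
    (u ++ s ++ v).filter (fun a => !((s.map Prod.fst).contains a.1)) = u ++ v := by
  simp only [List.map_append, List.nodup_append', List.disjoint_append_left] at h
  obtain ⟨⟨-, -, hus⟩, -, -, hsv⟩ := h
  have hs : s.filter (fun a => !((s.map Prod.fst).contains a.1)) = [] :=
    List.filter_eq_nil_iff.2 fun a ha => by
      simpa only [Bool.not_eq_true', List.contains_eq_mem, decide_eq_false_iff_not, not_not]
        using List.mem_map_of_mem ha
  have hu : u.filter (fun a => !((s.map Prod.fst).contains a.1)) = u :=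
    List.filter_eq_self.2 fun a ha => by
      simpa only [Bool.not_eq_true', List.contains_eq_mem, decide_eq_false_iff_not]
        using hus (List.mem_map_of_mem ha)
  have hv : v.filter (fun a => !((s.map Prod.fst).contains a.1)) = v :=
    List.filter_eq_self.2 fun a ha => by
      simpa only [Bool.not_eq_true', List.contains_eq_mem, decide_eq_false_iff_not]
        using fun ha' => hsv ha' (List.mem_map_of_mem ha)
  rw [List.filter_append, List.filter_append, hs, hu, hv, List.append_nil]

lemma tsDecomp_tsAux {n : ℕ} {w : Word} (hpos : (w.map Prod.fst).Nodup) (hbal : height w = 0)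
    (hn : w.length ≤ n) : TSDecomp w (tsAux n w) := by
  induction n generalizing w with
  | zero =>
    obtain rfl := List.length_eq_zero_iff.1 (Nat.le_zero.1 hn)
    exact .nil
  | succ n ih =>
    rcases eq_or_ne w [] with rfl | hne
    · exact .nil
    obtain ⟨s, hs⟩ := exists_findSoliton_eq_some hne hbal
    obtain ⟨m, u, v, rfl, hfirst⟩ := exists_isFirstSoliton_of_findSoliton_eq_some hs
    obtain ⟨c, hsol, -⟩ := hfirst.solitonWord
    have hsub : (u ++ v).Sublist (u ++ s ++ v) :=
      (List.sublist_append_left u s).append_right v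
    rw [tsAux, hs]
    simp only [filter_notMem_positions hpos]
    refine .cons hfirst (ih (hpos.sublist (hsub.map _)) ?_ ?_)
    · rw [height_append, height_append, hsol.height_eq] at hbal
      rw [height_append, ← hbal]
      ring
    · have := hsol.pos
      simp only [List.length_append, hsol.length_eq] at hn ⊢
      omega

lemma tsDecomp_tsSolitons {w : Word} (hpos : (w.map Prod.fst).Nodup) (hbal : height w = 0) :
    TSDecomp w (tsSolitons w) :=
  tsDecomp_tsAux hpos hbal le_rfl

lemma TSDecomp.flatten_perm {w : Word} {l : List Word} (h : TSDecomp w l) :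
    l.flatten.Perm w := by
  induction h with
  | nil => rfl
  | @cons m u s v l _ _ ih =>
    rw [List.flatten_cons]
    refine (ih.append_left s).trans ?_
    rw [← List.append_assoc]
    exact List.perm_append_comm.append_right v

lemma TSDecomp.exists_isSolitonWord {w s : Word} {l : List Word} (h : TSDecomp w l)
    (hs : s ∈ l) : ∃ m c, IsSolitonWord m c s := by
  induction h with
  | nil => simp at hs
  | cons hfirst _ ih =>
    rcases List.mem_cons.1 hs with rfl | hs
    · obtain ⟨c, hc, -⟩ := hfirst.solitonWord
      exact ⟨_, c, hc⟩
    · exact ih hs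

lemma DescendingRuns.mono {m n : ℕ} {p : Word} (h : DescendingRuns n p) (hmn : m ≤ n) :
    DescendingRuns m p := by
  simp only [DescendingRuns, List.pairwise_append, List.mem_singleton, forall_eq] at h ⊢
  exact ⟨h.1, List.pairwise_singleton _ _, fun r hr => hmn.trans_lt (h.2.2 r hr)⟩

lemma DescendingRuns.gt_of_runsOf_eq_append {m : ℕ} {p r : Word} {rs rs' : List Word}
    (h : DescendingRuns m p) (hp : runsOf p = rs ++ r :: rs') :
    m < r.length ∧ ∀ r' ∈ rs', r'.length < r.length := by
  rw [DescendingRuns, hp, List.map_append, List.append_assoc, List.map_cons, List.cons_append] at h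
  have h' := List.pairwise_cons.1 (List.pairwise_append.1 h).2.1
  exact ⟨h'.1 m (by simp), fun r' hr' => h'.1 _ (by simpa using Or.inl ⟨r', hr', rfl⟩)⟩

lemma runsOf_append_append {u r b : Word} {c : Bool} (hr : r ≠ []) (hc : ∀ a ∈ r, a.2 = c)
    (hu : ∀ a ∈ u.getLast?, a.2 ≠ c) (hb : ∀ a ∈ b.head?, a.2 = !c) :
    runsOf (u ++ (r ++ b)) = runsOf u ++ r :: runsOf b := by
  rw [runsOf_append, runsOf_append, runsOf_of_forall_eq hr hc, List.singleton_append]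
  · intro x hx y hy
    rw [hc x (List.mem_of_getLast? hx), hb y hy]
    cases c <;> simp
  · intro x hx y hy
    rw [List.head?_append_of_ne_nil _ hr] at hy
    rw [hc y (List.mem_of_head? hy)]
    exact hu x hx

/-- Decreasing runs can only extend past the start of the first soliton when they end inside it. -/
lemma IsFirstSoliton.lt_of_descendingRuns {m n : ℕ} {p q u s v : Word}
    (h : IsFirstSoliton m u s) (hp : DescendingRuns n p) (hpq : u ++ s ++ v = p ++ q)
    (hlt : u.length < p.length) : n < m ∧ p.length < u.length + s.length := by
  obtain ⟨c, hs, hlast⟩ := h.solitonWord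
  have hm := hs.pos
  have hlen := hs.length_eq
  have htake : (s.take m).length = m := by rw [List.length_take]; omega
  have hdrop : (s.drop m).length = m := by rw [List.length_drop]; omega
  have hdropne : s.drop m ≠ [] := List.ne_nil_of_length_pos (by omega)
  rw [List.append_assoc, ← List.take_append_drop m s, List.append_assoc] at hpq
  obtain ⟨a, rfl, ha⟩ | ⟨a, rfl, -⟩ := List.append_eq_append_iff.1 hpq
  swap
  · simp at hlt
  rw [List.length_append] at hlt ⊢
  obtain ⟨b, rfl, hb⟩ | ⟨b, hab, -⟩ := List.append_eq_append_iff.1 ha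
  · have hhead : ∀ x ∈ b.head?, x.2 = !c := by
      intro x hx
      have hx' : (s.drop m ++ v).head? = some x := by rw [hb, List.head?_append, hx]; rfl
      rw [List.head?_append_of_ne_nil _ hdropne] at hx'
      exact hs.drop_eq x (List.mem_of_head? hx')
    have hruns := runsOf_append_append (List.ne_nil_of_length_pos (htake.symm ▸ hm)) hs.take_eq
      hlast hhead
    obtain ⟨hnm, hdesc⟩ := hp.gt_of_runsOf_eq_append hruns
    rw [htake] at hnm hdesc
    refine ⟨hnm, ?_⟩
    by_contra hge
    obtain ⟨t, rfl⟩ : s.drop m <+: b := List.prefix_of_prefix_length_le ⟨v, rfl⟩ ⟨q, hb.symm⟩ (by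
      rw [List.length_append] at hge
      omega)
    obtain ⟨t', rs, ht'⟩ := runsOf_append_of_forall_eq hdropne hs.drop_eq t
    have := hdesc (s.drop m ++ t') (by simp [ht'])
    rw [List.length_append] at this
    omega
  · have hac : ∀ x ∈ a, x.2 = c := fun x hx => hs.take_eq x (by simp [hab, hx])
    have hruns := runsOf_append_append (b := []) (List.ne_nil_of_length_pos (by omega)) hac hlast
      (by simp)
    rw [List.append_nil] at hruns
    have hn := (hp.gt_of_runsOf_eq_append hruns).1
    have hle : a.length ≤ m := by
      rw [← htake, hab, List.length_append]
      exact Nat.le_add_right _ _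
    omega

lemma TSDecomp.subset_right {w p q s : Word} {l : List Word} {m : ℕ} (h : TSDecomp w l)
    (hw : w = p ++ q) (hp : DescendingRuns m p) (hs : s ∈ l) (hlen : s.length ≤ 2 * m) :
    s ⊆ q := by
  induction h generalizing p q with
  | nil => simp at hs
  | @cons n u t v l hfirst _ ih =>
    obtain ⟨c, htsol, -⟩ := hfirst.solitonWord
    rcases le_or_gt p.length u.length with hle | hlt
    · obtain ⟨u', rfl⟩ : p <+: u := List.prefix_of_prefix_length_le ⟨q, hw.symm⟩
        ⟨t ++ v, by simp⟩ hle
      obtain rfl : u' ++ t ++ v = q := by simpa using hw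
      rcases List.mem_cons.1 hs with rfl | hs
      · simp
      · intro a ha
        have := ih (p := p) (q := u' ++ v) (by simp) hp hs ha
        simp only [List.mem_append] at this ⊢
        tauto
    · obtain ⟨hmn, hplt⟩ := hfirst.lt_of_descendingRuns hp hw hlt
      have hvq : v <:+ q := List.suffix_of_suffix_length_le ⟨u ++ t, rfl⟩ ⟨p, hw.symm⟩ (by
        have := congrArg List.length hw
        simp only [List.length_append] at this
        omega)
      rcases List.mem_cons.1 hs with rfl | hs
      · have := htsol.length_eq
        omega
      · exact fun a ha => hvq.mem (ih rfl (hfirst.descending.mono hmn.le) hs ha)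

lemma TSDecomp.pairwise {w : Word} {l : List Word} (h : TSDecomp w l)
    (hw : w.Pairwise fun a b => a.1 < b.1) :
    l.Pairwise fun s s' => s'.length ≤ s.length → ∀ a ∈ s, ∀ b ∈ s', a.1 < b.1 := by
  induction h with
  | nil => exact .nil
  | @cons m u s v l hfirst htail ih =>
    obtain ⟨c, hs, -⟩ := hfirst.solitonWord
    have hsub : (u ++ v).Sublist (u ++ s ++ v) :=
      (List.sublist_append_left u s).append_right v
    refine List.pairwise_cons.2 ⟨fun s' hs' hlen a ha b hb => ?_, ih (hw.sublist hsub)⟩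
    have hbv := htail.subset_right rfl hfirst.descending hs' (hs.length_eq ▸ hlen) hb
    exact (List.pairwise_append.1 hw).2.2 a (List.mem_append_right _ ha) b hbv

lemma runsOf_map (f : ℤ → ℤ) (w : Word) :
    runsOf (w.map (Prod.map f id)) = (runsOf w).map (List.map (Prod.map f id)) := by
  induction w with
  | nil => rfl
  | cons a l ih =>
    have hhead (r : Word) : (r.map (Prod.map f id)).head?.map Prod.snd = r.head?.map Prod.snd := by
      cases r <;> rfl
    rw [List.map_cons, runsOf, runsOf, ih]
    rcases runsOf l with _ | ⟨r, rs⟩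
    · rfl
    · simp only [List.map_cons, hhead]
      split_ifs <;> simp_all

lemma findSoliton_map (f : ℤ → ℤ) (rs : List Word) :
    findSoliton (rs.map (List.map (Prod.map f id))) =
      (findSoliton rs).map (List.map (Prod.map f id)) := by
  induction rs with
  | nil => rfl
  | cons r rs ih =>
    rcases rs with _ | ⟨r', rs⟩
    · rfl
    · simp only [List.map_cons, findSoliton, List.length_map] at ih ⊢
      split_ifs
      · simp [List.map_take]
      · exact ih

lemma tsAux_map {f : ℤ → ℤ} (hf : Function.Injective f) (n : ℕ) (w : Word) :
    tsAux n (w.map (Prod.map f id)) = (tsAux n w).map (List.map (Prod.map f id)) := by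
  induction n generalizing w with
  | zero => rfl
  | succ n ih =>
    rw [tsAux, tsAux, runsOf_map, findSoliton_map]
    rcases findSoliton (runsOf w) with _ | s
    · rfl
    · have hpos : (s.map (Prod.map f id)).map Prod.fst = (s.map Prod.fst).map f := by simp
      simp only [Option.map_some, List.map_cons, ← ih, List.filter_map, hpos]
      congr 3
      refine List.filter_congr fun a _ => ?_
      simp only [Function.comp_apply, List.contains_eq_mem, Prod.map_fst,
        List.mem_map_of_injective hf]

lemma tsSolitons_map {f : ℤ → ℤ} (hf : Function.Injective f) (w : Word) :
    tsSolitons (w.map (Prod.map f id)) = (tsSolitons w).map (List.map (Prod.map f id)) := by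
  rw [tsSolitons, tsSolitons, List.length_map, tsAux_map hf]

/-! ### Records and excursions -/

lemma xi0_sub_xi0_pred (η : Cfg) (x : ℤ) : xi0 η x - xi0 η (x - 1) = 2 * valZ (η x) - 1 := by
  rcases lt_trichotomy x 0 with h | rfl | h
  · have hIcc : Icc x 0 = insert x (Icc (x + 1) 0) := by ext y; simp; omega
    rw [xi0, xi0, if_neg (by omega), if_neg (by omega), sub_add_cancel, hIcc, sum_insert (by simp)]
    ring
  · simp [xi0]
  · have hIcc : Icc 1 x = insert x (Icc 1 (x - 1)) := by ext y; simp; omega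
    rw [xi0, xi0, if_pos (by omega), if_pos (by omega), hIcc, sum_insert (by simp)]
    ring

lemma sum_Icc_eq_xi0_sub (η : Cfg) {z x : ℤ} (h : z ≤ x) :
    ∑ y ∈ Icc z x, (2 * valZ (η y) - 1) = xi0 η x - xi0 η (z - 1) := by
  induction x, h using Int.leInduction with
  | base => simp [xi0_sub_xi0_pred]
  | succ x hx ih =>
    have hIcc : Icc z (x + 1) = insert (x + 1) (Icc z x) := by ext y; simp; omega
    have hstep := xi0_sub_xi0_pred η (x + 1)
    rw [add_sub_cancel_right] at hstep
    rw [hIcc, sum_insert (by simp), ih, ← hstep]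
    ring

lemma isRecord_iff_xi0_lt (η : Cfg) (x : ℤ) : isRecord η x ↔ ∀ y < x, xi0 η x < xi0 η y := by
  have hbalance (z : ℤ) (hz : z ≤ x) :
      (∑ y ∈ Icc z x, valZ (η y)) < ∑ y ∈ Icc z x, (1 - valZ (η y)) ↔
        xi0 η x < xi0 η (z - 1) := by
    rw [← sub_neg, ← sub_neg (a := xi0 η x), ← sum_sub_distrib, ← sum_Icc_eq_xi0_sub η hz]
    refine iff_of_eq (congrArg (· < 0) (sum_congr rfl fun y _ => by ring))
  refine ⟨fun h y hy => ?_, fun h z hz => (hbalance z hz).2 (h _ (by omega))⟩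
  simpa using (hbalance (y + 1) hy).1 (h (y + 1) hy)

lemma isRecord_of_isLeast {η : Cfg} {c x : ℤ} (h : IsLeast {y | xi0 η y ≤ c} x) :
    isRecord η x := by
  refine (isRecord_iff_xi0_lt η x).2 fun y hy => ?_
  have hx : xi0 η x ≤ c := h.1
  by_contra! hle
  exact hy.not_ge (h.2 (hle.trans hx))

/-- `y₁ < y₂` are consecutive records of `η`, so that the excursion between them is the word
carried by the open interval `(y₁, y₂)`. -/
structure ConsecutiveRecords (η : Cfg) (y₁ y₂ : ℤ) : Prop where
  lt : y₁ < y₂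
  left : isRecord η y₁
  right : isRecord η y₂
  not_isRecord : ∀ z, y₁ < z → z < y₂ → ¬ isRecord η z

lemma consecutiveRecords_iff {η : Cfg} {y₁ y₂ : ℤ} : ConsecutiveRecords η y₁ y₂ ↔
    y₁ < y₂ ∧ isRecord η y₁ ∧ isRecord η y₂ ∧ ∀ z, y₁ < z → z < y₂ → ¬ isRecord η z :=
  ⟨fun h => ⟨h.lt, h.left, h.right, h.not_isRecord⟩, fun ⟨h₁, h₂, h₃, h₄⟩ => ⟨h₁, h₂, h₃, h₄⟩⟩

namespace ConsecutiveRecords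

variable {η : Cfg} {y₁ y₂ z₁ z₂ : ℤ}

lemma xi0_left_le (h : ConsecutiveRecords η y₁ y₂) {y : ℤ} (h₁ : y₁ ≤ y) (h₂ : y < y₂) :
    xi0 η y₁ ≤ xi0 η y := by
  by_contra! hlt
  have hbdd (z : ℤ) (hz : xi0 η z < xi0 η y₁) : y₁ < z := by
    by_contra! hle
    rcases hle.lt_or_eq with hlt' | rfl
    · exact hz.not_gt ((isRecord_iff_xi0_lt η y₁).1 h.left z hlt')
    · exact hz.false
  obtain ⟨x, hx, hmin⟩ := Int.exists_least_of_bdd (P := fun z => xi0 η z < xi0 η y₁)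
    ⟨y₁, fun z hz => (hbdd z hz).le⟩ ⟨y, hlt⟩
  refine h.not_isRecord x (hbdd x hx) ((hmin y hlt).trans_lt h₂)
    (isRecord_of_isLeast (c := xi0 η y₁ - 1) ⟨Int.le_sub_one_of_lt hx, fun z hz => hmin z ?_⟩)
  exact Int.lt_of_le_sub_one hz

lemma xi0_right_pred (h : ConsecutiveRecords η y₁ y₂) : xi0 η (y₂ - 1) = xi0 η y₁ := by
  have hlt := h.lt
  have hge := h.xi0_left_le (y := y₂ - 1) (by omega) (by omega)
  have hright := (isRecord_iff_xi0_lt η y₂).1 h.right y₁ hlt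
  have hstep := xi0_sub_xi0_pred η y₂
  cases hb : η y₂ <;> simp only [hb, valZ] at hstep <;> grind

lemma eq_or_le_or_le (h : ConsecutiveRecords η y₁ y₂) (h' : ConsecutiveRecords η z₁ z₂) :
    (y₁ = z₁ ∧ y₂ = z₂) ∨ y₂ ≤ z₁ ∨ z₂ ≤ y₁ := by
  by_contra! ⟨hne, hlt, hlt'⟩
  rcases lt_trichotomy y₁ z₁ with hy | rfl | hy
  · exact h.not_isRecord z₁ hy hlt h'.left
  · rcases lt_or_gt_of_ne (hne rfl) with hy | hy
    · exact h'.not_isRecord y₂ h.lt hy h.right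
    · exact h.not_isRecord z₂ h'.lt hy h'.right
  · exact h'.not_isRecord y₁ hy hlt' h.left

end ConsecutiveRecords

-- `excursionWord` coerces the list `List.range _` as a whole to `List ℤ`.
lemma excursionWord_eq_map_range (η : Cfg) (y₁ y₂ : ℤ) :
    excursionWord η y₁ y₂ =
      (List.range (y₂ - y₁ - 1).toNat).map fun n : ℕ => (y₁ + 1 + (n : ℤ), η (y₁ + 1 + n)) := by
  simp [excursionWord, List.map_eq_flatMap, List.flatMap_assoc]

lemma mem_excursionWord {η : Cfg} {y₁ y₂ : ℤ} {a : ℤ × Bool} :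
    a ∈ excursionWord η y₁ y₂ ↔ y₁ < a.1 ∧ a.1 < y₂ ∧ a.2 = η a.1 := by
  simp only [excursionWord_eq_map_range, List.mem_map, List.mem_range]
  constructor
  · rintro ⟨n, hn, rfl⟩
    exact ⟨by dsimp only; omega, by dsimp only; omega, rfl⟩
  · rintro ⟨h₁, h₂, h⟩
    have ha : y₁ + 1 + ((a.1 - y₁ - 1).toNat : ℤ) = a.1 := by omega
    exact ⟨(a.1 - y₁ - 1).toNat, by omega, by rw [ha, ← h]⟩

lemma pairwise_excursionWord (η : Cfg) (y₁ y₂ : ℤ) :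
    (excursionWord η y₁ y₂).Pairwise fun a b => a.1 < b.1 := by
  rw [excursionWord_eq_map_range, List.pairwise_map]
  exact List.pairwise_lt_range.imp fun h => by simpa using h

lemma height_map_range (η : Cfg) (y : ℤ) (n : ℕ) :
    height ((List.range n).map fun i : ℕ => (y + 1 + (i : ℤ), η (y + 1 + i))) =
      xi0 η (y + n) - xi0 η y := by
  induction n with
  | zero => simp
  | succ n ih =>
    have hstep := xi0_sub_xi0_pred η (y + 1 + n)
    rw [add_right_comm, add_sub_cancel_right] at hstep
    rw [List.range_succ, List.map_append, height_append, ih, Nat.cast_succ, ← add_assoc]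
    simp [height, add_right_comm y 1, ← hstep]

lemma ConsecutiveRecords.height_excursionWord {η : Cfg} {y₁ y₂ : ℤ}
    (h : ConsecutiveRecords η y₁ y₂) : height (excursionWord η y₁ y₂) = 0 := by
  have hlt := h.lt
  have hend : y₁ + ((y₂ - y₁ - 1).toNat : ℤ) = y₂ - 1 := by omega
  rw [excursionWord_eq_map_range, height_map_range, hend, h.xi0_right_pred, sub_self]

/-! ### Solitons -/

lemma nodup_positions_excursionWord (η : Cfg) (y₁ y₂ : ℤ) :
    ((excursionWord η y₁ y₂).map Prod.fst).Nodup :=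
  List.pairwise_map.2 ((pairwise_excursionWord η y₁ y₂).imp LT.lt.ne)

lemma ConsecutiveRecords.tsDecomp {η : Cfg} {y₁ y₂ : ℤ} (h : ConsecutiveRecords η y₁ y₂) :
    TSDecomp (excursionWord η y₁ y₂) (tsSolitons (excursionWord η y₁ y₂)) :=
  tsDecomp_tsSolitons (nodup_positions_excursionWord η y₁ y₂) h.height_excursionWord

lemma mem_Gamma_iff {η : Cfg} {k : ℕ} {γ : Finset ℤ} :
    γ ∈ Gamma η k ↔ ∃ y₁ y₂, ConsecutiveRecords η y₁ y₂ ∧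
      ∃ s ∈ tsSolitons (excursionWord η y₁ y₂), s.length = 2 * k ∧
        γ = (s.map Prod.fst).toFinset := by
  simp only [consecutiveRecords_iff, and_assoc]
  rfl

lemma mem_toFinset_map_fst {s : Word} {x : ℤ} :
    x ∈ (s.map Prod.fst).toFinset ↔ ∃ a ∈ s, a.1 = x := by
  rw [List.mem_toFinset, List.mem_map]

namespace ConsecutiveRecords

variable {η : Cfg} {y₁ y₂ : ℤ} {s s' : Word}

lemma mem_excursionWord_of_mem (h : ConsecutiveRecords η y₁ y₂)
    (hs : s ∈ tsSolitons (excursionWord η y₁ y₂)) {a : ℤ × Bool} (ha : a ∈ s) :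
    y₁ < a.1 ∧ a.1 < y₂ ∧ a.2 = η a.1 :=
  mem_excursionWord.1 (h.tsDecomp.flatten_perm.mem_iff.1 (List.mem_flatten_of_mem hs ha))

lemma nodup_positions (h : ConsecutiveRecords η y₁ y₂) :
    (∀ s ∈ tsSolitons (excursionWord η y₁ y₂), (s.map Prod.fst).Nodup) ∧
      (tsSolitons (excursionWord η y₁ y₂)).Pairwise fun s s' =>
        (s.map Prod.fst).Disjoint (s'.map Prod.fst) := by
  have hnodup := (h.tsDecomp.flatten_perm.map Prod.fst).nodup_iff.2
    (nodup_positions_excursionWord η y₁ y₂)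
  rw [List.map_flatten, List.nodup_flatten, List.forall_mem_map, List.pairwise_map] at hnodup
  exact hnodup

lemma eq_of_mem_of_mem (h : ConsecutiveRecords η y₁ y₂)
    (hs : s ∈ tsSolitons (excursionWord η y₁ y₂)) (hs' : s' ∈ tsSolitons (excursionWord η y₁ y₂))
    {x : ℤ} (hx : x ∈ s.map Prod.fst) (hx' : x ∈ s'.map Prod.fst) : s = s' := by
  obtain ⟨i, hi, rfl⟩ := List.mem_iff_getElem.1 hs
  obtain ⟨j, hj, rfl⟩ := List.mem_iff_getElem.1 hs'
  have hdisj := List.pairwise_iff_getElem.1 h.nodup_positions.2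
  rcases lt_trichotomy i j with hij | rfl | hij
  · exact absurd hx' (hdisj i j hi hj hij hx)
  · rfl
  · exact absurd hx (hdisj j i hj hi hij hx')

lemma eq_or_forall_lt_or_forall_gt (h : ConsecutiveRecords η y₁ y₂)
    (hs : s ∈ tsSolitons (excursionWord η y₁ y₂)) (hs' : s' ∈ tsSolitons (excursionWord η y₁ y₂))
    (hlen : s.length = s'.length) :
    s = s' ∨ (∀ a ∈ s, ∀ b ∈ s', a.1 < b.1) ∨ ∀ a ∈ s, ∀ b ∈ s', b.1 < a.1 := by
  obtain ⟨i, hi, rfl⟩ := List.mem_iff_getElem.1 hs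
  obtain ⟨j, hj, rfl⟩ := List.mem_iff_getElem.1 hs'
  have hsep := List.pairwise_iff_getElem.1 (h.tsDecomp.pairwise (pairwise_excursionWord η y₁ y₂))
  rcases lt_trichotomy i j with hij | rfl | hij
  · exact .inr (.inl (hsep i j hi hj hij hlen.ge))
  · exact .inl rfl
  · exact .inr (.inr fun a ha b hb => hsep j i hj hi hij hlen.le b hb a ha)

end ConsecutiveRecords

section Gamma

variable {η : Cfg} {k k' : ℕ} {γ γ' : Finset ℤ}

lemma card_of_mem_Gamma (h : γ ∈ Gamma η k) : γ.card = 2 * k := by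
  obtain ⟨y₁, y₂, hrec, s, hs, hlen, rfl⟩ := mem_Gamma_iff.1 h
  rw [List.toFinset_card_of_nodup (hrec.nodup_positions.1 s hs), List.length_map, hlen]

lemma exists_mem_eq_of_mem_Gamma (h : γ ∈ Gamma η k) (b : Bool) : ∃ x ∈ γ, η x = b := by
  obtain ⟨y₁, y₂, hrec, s, hs, -, rfl⟩ := mem_Gamma_iff.1 h
  obtain ⟨m, c, hsol⟩ := hrec.tsDecomp.exists_isSolitonWord hs
  obtain ⟨a, ha, hab⟩ := hsol.exists_mem b
  exact ⟨a.1, mem_toFinset_map_fst.2 ⟨a, ha, rfl⟩,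
    (hrec.mem_excursionWord_of_mem hs ha).2.2.symm.trans hab⟩

lemma headF_nonempty (h : γ ∈ Gamma η k) : (headF η γ).Nonempty :=
  filter_nonempty_iff.2 (exists_mem_eq_of_mem_Gamma h true)

lemma tailF_nonempty (h : γ ∈ Gamma η k) : (tailF η γ).Nonempty :=
  filter_nonempty_iff.2 (exists_mem_eq_of_mem_Gamma h false)

lemma nonempty_of_mem_Gamma (h : γ ∈ Gamma η k) : γ.Nonempty :=
  (headF_nonempty h).mono (filter_subset _ _)

lemma exists_consecutiveRecords_of_mem_Gamma (h : γ ∈ Gamma η k) :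
    ∃ y₁ y₂, ConsecutiveRecords η y₁ y₂ ∧ ∀ x ∈ γ, y₁ < x ∧ x < y₂ := by
  obtain ⟨y₁, y₂, hrec, s, hs, -, rfl⟩ := mem_Gamma_iff.1 h
  refine ⟨y₁, y₂, hrec, fun x hx => ?_⟩
  obtain ⟨a, ha, rfl⟩ := mem_toFinset_map_fst.1 hx
  have := hrec.mem_excursionWord_of_mem hs ha
  exact ⟨this.1, this.2.1⟩

lemma Gamma_eq_of_mem_of_mem (h : γ ∈ Gamma η k) (h' : γ' ∈ Gamma η k') {x : ℤ} (hx : x ∈ γ)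
    (hx' : x ∈ γ') : γ = γ' := by
  obtain ⟨y₁, y₂, hrec, s, hs, -, rfl⟩ := mem_Gamma_iff.1 h
  obtain ⟨z₁, z₂, hrec', s', hs', -, rfl⟩ := mem_Gamma_iff.1 h'
  obtain ⟨a, ha, rfl⟩ := mem_toFinset_map_fst.1 hx
  obtain ⟨a', ha', haa'⟩ := mem_toFinset_map_fst.1 hx'
  have hrange := hrec.mem_excursionWord_of_mem hs ha
  have hrange' := hrec'.mem_excursionWord_of_mem hs' ha'
  obtain ⟨rfl, rfl⟩ | hle | hle := hrec.eq_or_le_or_le hrec'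
  · rw [hrec.eq_of_mem_of_mem hs hs' (List.mem_toFinset.1 hx) (List.mem_toFinset.1 hx')]
  all_goals omega

lemma Gamma_size_eq_of_mem_of_mem (h : γ ∈ Gamma η k) (h' : γ' ∈ Gamma η k') {x : ℤ}
    (hx : x ∈ γ) (hx' : x ∈ γ') : k = k' := by
  have hcard := card_of_mem_Gamma h
  rw [Gamma_eq_of_mem_of_mem h h' hx hx', card_of_mem_Gamma h'] at hcard
  omega

lemma Gamma_eq_or_forall_lt_or_forall_gt (h : γ ∈ Gamma η k) (h' : γ' ∈ Gamma η k) :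
    γ = γ' ∨ (∀ x ∈ γ, ∀ y ∈ γ', x < y) ∨ ∀ x ∈ γ, ∀ y ∈ γ', y < x := by
  obtain ⟨y₁, y₂, hrec, s, hs, hlen, rfl⟩ := mem_Gamma_iff.1 h
  obtain ⟨z₁, z₂, hrec', s', hs', hlen', rfl⟩ := mem_Gamma_iff.1 h'
  simp only [mem_toFinset_map_fst, forall_exists_index, and_imp, forall_apply_eq_imp_iff₂]
  obtain ⟨rfl, rfl⟩ | hle | hle := hrec.eq_or_le_or_le hrec'
  · obtain rfl | hsep := hrec.eq_or_forall_lt_or_forall_gt hs hs' (hlen.trans hlen'.symm)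
    · exact .inl rfl
    · exact .inr hsep
  · refine .inr (.inl fun a ha b hb => ?_)
    have := hrec.mem_excursionWord_of_mem hs ha
    have := hrec'.mem_excursionWord_of_mem hs' hb
    omega
  · refine .inr (.inr fun a ha b hb => ?_)
    have := hrec.mem_excursionWord_of_mem hs ha
    have := hrec'.mem_excursionWord_of_mem hs' hb
    omega

lemma ConsecutiveRecords.exists_mem_Gamma {y₁ y₂ x : ℤ} (h : ConsecutiveRecords η y₁ y₂)
    (h₁ : y₁ < x) (h₂ : x < y₂) : ∃ k, ∃ γ ∈ Gamma η k, x ∈ γ := by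
  have hx : (x, η x) ∈ (tsSolitons (excursionWord η y₁ y₂)).flatten :=
    h.tsDecomp.flatten_perm.mem_iff.2 (mem_excursionWord.2 ⟨h₁, h₂, rfl⟩)
  obtain ⟨s, hs, hxs⟩ := List.mem_flatten.1 hx
  obtain ⟨m, c, hsol⟩ := h.tsDecomp.exists_isSolitonWord hs
  exact ⟨m, _, mem_Gamma_iff.2 ⟨y₁, y₂, h, s, hs, hsol.length_eq, rfl⟩,
    mem_toFinset_map_fst.2 ⟨_, hxs, rfl⟩⟩

end Gamma

/-! ### Equivariance under the shift -/

lemma leftmost_mem {γ : Finset ℤ} (h : γ.Nonempty) : leftmost γ ∈ γ :=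
  mem_coe.1 (Int.csInf_mem (coe_nonempty.2 h) γ.bddBelow)

lemma leftmost_le {γ : Finset ℤ} {x : ℤ} (h : x ∈ γ) : leftmost γ ≤ x :=
  csInf_le γ.bddBelow (mem_coe.2 h)

section Shift

open scoped Pointwise

variable {n : ℤ} {η : Cfg} {k : ℕ} {γ γ' : Finset ℤ}

lemma leftmost_vadd (h : γ.Nonempty) : leftmost (n +ᵥ γ) = n + leftmost γ := by
  rw [leftmost, coe_vadd_finset]
  exact ((OrderIso.addLeft n).map_csInf' (coe_nonempty.2 h) γ.bddBelow).symm

lemma isRecord_shiftBy {x : ℤ} : isRecord (shiftBy n η) x ↔ isRecord η (n + x) := by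
  have hsum (f : ℤ → ℤ) (z : ℤ) :
      ∑ y ∈ Icc z x, f (y + n) = ∑ y ∈ Icc (n + z) (n + x), f y := by
    rw [← image_add_left_Icc, sum_image (add_right_injective n).injOn]
    simp only [add_comm]
  refine (Equiv.addLeft n).forall_congr fun {z} => ?_
  simp only [shiftBy, hsum (fun y => valZ (η y)), hsum (fun y => 1 - valZ (η y)),
    Equiv.coe_addLeft, add_le_add_iff_left]

lemma bbsT_shiftBy (n : ℤ) (η : Cfg) : bbsT (shiftBy n η) = shiftBy n (bbsT η) := by
  funext x
  have hrec : isRecord (shiftBy n η) x ↔ isRecord η (x + n) := add_comm x n ▸ isRecord_shiftBy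
  by_cases hx : isRecord η (x + n) <;> simp [bbsT, shiftBy, hrec, hx]

lemma bbsT_iterate_shiftBy (n : ℤ) (t : ℕ) (η : Cfg) :
    bbsT^[t] (shiftBy n η) = shiftBy n (bbsT^[t] η) :=
  (Function.Commute.iterate_left (g := shiftBy n) (f := bbsT)
    (fun η => bbsT_shiftBy n η) t).eq η

lemma excursionWord_add (n : ℤ) (η : Cfg) (y₁ y₂ : ℤ) :
    excursionWord η (n + y₁) (n + y₂) =
      (excursionWord (shiftBy n η) y₁ y₂).map (Prod.map (n + ·) id) := by
  rw [excursionWord_eq_map_range, excursionWord_eq_map_range, List.map_map, add_sub_add_left_eq_sub]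
  refine List.map_congr_left fun i _ => ?_
  simp only [shiftBy, Function.comp_apply, Prod.map_apply, id_eq, add_assoc, add_comm,
    add_left_comm]

lemma consecutiveRecords_shiftBy {y₁ y₂ : ℤ} :
    ConsecutiveRecords (shiftBy n η) y₁ y₂ ↔ ConsecutiveRecords η (n + y₁) (n + y₂) := by
  refine ⟨fun h => ⟨by simpa using h.lt, isRecord_shiftBy.1 h.left, isRecord_shiftBy.1 h.right,
    fun z h₁ h₂ hz => ?_⟩, fun h => ⟨by simpa using h.lt, isRecord_shiftBy.2 h.left,
    isRecord_shiftBy.2 h.right, fun z h₁ h₂ hz => ?_⟩⟩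
  · exact h.not_isRecord (z - n) (by omega) (by omega) (isRecord_shiftBy.2 (by simpa using hz))
  · exact h.not_isRecord (n + z) (by omega) (by omega) (isRecord_shiftBy.1 hz)

lemma vadd_mem_Gamma_of_mem (h : γ ∈ Gamma (shiftBy n η) k) : n +ᵥ γ ∈ Gamma η k := by
  obtain ⟨y₁, y₂, hrec, s, hs, hlen, rfl⟩ := mem_Gamma_iff.1 h
  refine mem_Gamma_iff.2 ⟨_, _, consecutiveRecords_shiftBy.1 hrec, s.map (Prod.map (n + ·) id),
    ?_, by simpa, ?_⟩
  · rw [excursionWord_add, tsSolitons_map (add_right_injective n)]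
    exact List.mem_map_of_mem hs
  · ext x
    simp [mem_vadd_finset]

lemma mem_Gamma_shiftBy : γ ∈ Gamma (shiftBy n η) k ↔ n +ᵥ γ ∈ Gamma η k := by
  refine ⟨vadd_mem_Gamma_of_mem, fun h => ?_⟩
  have hη : shiftBy (-n) (shiftBy n η) = η := by funext x; simp [shiftBy]
  rw [← hη] at h
  simpa using vadd_mem_Gamma_of_mem h

lemma headF_vadd (n : ℤ) (η : Cfg) (γ : Finset ℤ) :
    headF η (n +ᵥ γ) = n +ᵥ headF (shiftBy n η) γ := by
  ext x
  rw [headF, mem_filter, ← neg_vadd_mem_iff, ← neg_vadd_mem_iff, headF, mem_filter]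
  simp only [shiftBy, vadd_eq_add, neg_add_cancel_comm]

lemma tailF_vadd (n : ℤ) (η : Cfg) (γ : Finset ℤ) :
    tailF η (n +ᵥ γ) = n +ᵥ tailF (shiftBy n η) γ := by
  ext x
  rw [tailF, mem_filter, ← neg_vadd_mem_iff, ← neg_vadd_mem_iff, tailF, mem_filter]
  simp only [shiftBy, vadd_eq_add, neg_add_cancel_comm]

end Shift

/-! ### Trajectories -/

/-- `Evolves η k t γ γ'`: the `k`-soliton `γ` of `η` has become the `k`-soliton `γ'` of `T^t η`.
Unlike `solTraj`, this relation carries no junk value. -/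
def Evolves (η : Cfg) (k : ℕ) : ℕ → Finset ℤ → Finset ℤ → Prop
  | 0, γ, γ' => γ ∈ Gamma η k ∧ γ' = γ
  | t + 1, γ, γ'' => ∃ γ', Evolves η k t γ γ' ∧ γ'' ∈ Gamma (bbsT^[t + 1] η) k ∧
      headF (bbsT^[t + 1] η) γ'' = tailF (bbsT^[t] η) γ'

lemma Gamma_eq_of_tailF_eq {η : Cfg} {k : ℕ} {γ γ' : Finset ℤ} (h : γ ∈ Gamma η k)
    (h' : γ' ∈ Gamma η k) (heq : tailF η γ = tailF η γ') : γ = γ' := by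
  obtain ⟨x, hx⟩ := tailF_nonempty h
  exact Gamma_eq_of_mem_of_mem h h' (mem_of_mem_filter x hx) (mem_of_mem_filter x (heq ▸ hx))

namespace Evolves

variable {η : Cfg} {k t : ℕ} {γ γ' δ : Finset ℤ}

lemma mem_left (h : Evolves η k t γ δ) : γ ∈ Gamma η k := by
  induction t generalizing δ with
  | zero => exact h.1
  | succ t ih =>
    obtain ⟨δ', hδ', -⟩ := h
    exact ih hδ'

lemma mem_right (h : Evolves η k t γ δ) : δ ∈ Gamma (bbsT^[t] η) k := by
  cases t with
  | zero => exact h.2 ▸ h.1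
  | succ t =>
    obtain ⟨δ', -, hδ, -⟩ := h
    exact hδ

lemma left_unique (h : Evolves η k t γ δ) (h' : Evolves η k t γ' δ) : γ = γ' := by
  induction t generalizing δ with
  | zero => exact h.2.symm.trans h'.2
  | succ t ih =>
    obtain ⟨ε, hε, -, hhead⟩ := h
    obtain ⟨ε', hε', -, hhead'⟩ := h'
    obtain rfl := Gamma_eq_of_tailF_eq hε.mem_right hε'.mem_right (hhead.symm.trans hhead')
    exact ih hε hε'

/-- The head of `γ^{t+1}` is the tail of `γ^t`, so a soliton cannot jump over the origin. -/
lemma exists_straddle (h : Evolves η k t γ δ) (hγ : leftmost γ < 0) (hδ : 0 ≤ leftmost δ) :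
    ∃ s < t, ∃ ε, Evolves η k s γ ε ∧ leftmost ε < 0 ∧ ∃ x ∈ ε, 0 ≤ x := by
  induction t generalizing δ with
  | zero =>
    obtain ⟨-, rfl⟩ := h
    omega
  | succ t ih =>
    obtain ⟨ε, hε, hδΓ, hhead⟩ := h
    by_cases hneg : leftmost ε < 0
    · obtain ⟨x, hx⟩ := headF_nonempty hδΓ
      have hxδ : leftmost δ ≤ x := leftmost_le (mem_of_mem_filter x hx)
      rw [hhead] at hx
      exact ⟨t, t.lt_succ_self, ε, hε, hneg, x, mem_of_mem_filter x hx, hδ.trans hxδ⟩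
    · obtain ⟨s, hs, hε'⟩ := ih hε (not_lt.1 hneg)
      exact ⟨s, hs.trans t.lt_succ_self, hε'⟩

end Evolves

open scoped Pointwise in
lemma evolves_shiftBy {n : ℤ} {η : Cfg} {k t : ℕ} {γ δ : Finset ℤ} :
    Evolves (shiftBy n η) k t γ δ ↔ Evolves η k t (n +ᵥ γ) (n +ᵥ δ) := by
  induction t generalizing δ with
  | zero => simp only [Evolves, mem_Gamma_shiftBy, (AddAction.injective n).eq_iff]
  | succ t ih =>
    refine (AddAction.toPerm n).exists_congr fun δ' => ?_
    simp only [AddAction.toPerm_apply, ih, bbsT_iterate_shiftBy, mem_Gamma_shiftBy, headF_vadd,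
      tailF_vadd, (AddAction.injective n).eq_iff]

lemma Gamma_eq_of_straddle {η : Cfg} {k : ℕ} {γ γ' : Finset ℤ} (h : γ ∈ Gamma η k)
    (h' : γ' ∈ Gamma η k) (hneg : leftmost γ < 0) (hpos : ∃ x ∈ γ, 0 ≤ x)
    (hneg' : leftmost γ' < 0) (hpos' : ∃ x ∈ γ', 0 ≤ x) : γ = γ' := by
  obtain ⟨x, hx, hx0⟩ := hpos
  obtain ⟨x', hx', hx0'⟩ := hpos'
  obtain heq | hlt | hgt := Gamma_eq_or_forall_lt_or_forall_gt h h'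
  · exact heq
  · have := hlt x hx _ (leftmost_mem (nonempty_of_mem_Gamma h'))
    omega
  · have := hgt _ (leftmost_mem (nonempty_of_mem_Gamma h)) x' hx'
    omega

/-- Each crossing occupies one of the `N` time steps, and two solitons of the same size cannot
straddle the origin at the same time. -/
lemma card_le_of_forall_crossing {η : Cfg} {k N : ℕ} {X : Finset ℤ}
    (hX : ∀ x ∈ X, ∃ γ δ, Evolves η k N γ δ ∧ leftmost γ = x ∧ x < 0 ∧ 0 ≤ leftmost δ) :
    #X ≤ N := by
  have hstraddle (x : ℤ) (hx : x ∈ X) : ∃ s < N, ∃ γ ε, Evolves η k s γ ε ∧ leftmost γ = x ∧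
      leftmost ε < 0 ∧ ∃ y ∈ ε, 0 ≤ y := by
    obtain ⟨γ, δ, h, rfl, hneg, hδ⟩ := hX x hx
    obtain ⟨s, hs, ε, hε⟩ := h.exists_straddle hneg hδ
    exact ⟨s, hs, γ, ε, hε.1, rfl, hε.2⟩
  choose! s hs γ ε hevol hleft hneg hpos using hstraddle
  have hcard := card_le_card_of_injOn (t := range N) s (fun x hx => by simpa using hs x hx) ?_
  · simpa using hcard
  intro x hx y hy hxy
  have hevol' := hevol y hy
  rw [← hxy] at hevol'
  have hε := Gamma_eq_of_straddle (hevol x hx).mem_right hevol'.mem_right (hneg x hx) (hpos x hx)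
    (hneg y hy) (hpos y hy)
  rw [← hleft x hx, ← hleft y hy, (hevol x hx).left_unique (hε ▸ hevol')]

lemma solTraj_succ_eq_empty_or {η : Cfg} {k : ℕ} {γ : Finset ℤ} (t : ℕ) :
    solTraj η k γ (t + 1) = ∅ ∨ solTraj η k γ (t + 1) ∈ Gamma (bbsT^[t + 1] η) k ∧
      headF (bbsT^[t + 1] η) (solTraj η k γ (t + 1)) = tailF (bbsT^[t] η) (solTraj η k γ t) := by
  rw [solTraj]
  split_ifs with h
  · exact .inr h.choose_spec
  · exact .inl rfl

lemma evolves_solTraj_or_eq_empty {η : Cfg} {k : ℕ} {γ : Finset ℤ} (hγ : γ ∈ Gamma η k) (t : ℕ) :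
    Evolves η k t γ (solTraj η k γ t) ∨ ∀ s ≥ t, solTraj η k γ s = ∅ := by
  induction t with
  | zero => exact .inl ⟨hγ, rfl⟩
  | succ t ih =>
    obtain hevol | hdead := ih
    · obtain hempty | hnext := solTraj_succ_eq_empty_or (η := η) (k := k) (γ := γ) t
      · refine .inr fun s hs => ?_
        induction s, hs using Nat.le_induction with
        | base => exact hempty
        | succ s _ ih =>
          refine (solTraj_succ_eq_empty_or s).resolve_right fun ⟨hmem, hhead⟩ => ?_
          rw [ih, tailF, filter_empty] at hhead
          exact (headF_nonempty hmem).ne_empty hhead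
      · exact .inl ⟨_, hevol, hnext⟩
    · exact .inr fun s hs => hdead s (t.le_succ.trans hs)

/-- A trajectory that stops is constantly `∅`, where `leftmost` takes the junk value `0`. -/
lemma evolves_solTraj_of_tendsto {η : Cfg} {k : ℕ} {γ : Finset ℤ} (hγ : γ ∈ Gamma η k) {v : ℝ}
    (hv : v ≠ 0)
    (hlim : Tendsto (fun t : ℕ => (leftmost (solTraj η k γ t) : ℝ) / t) atTop (nhds v)) (t : ℕ) :
    Evolves η k t γ (solTraj η k γ t) := by
  refine (evolves_solTraj_or_eq_empty hγ t).resolve_right fun hempty => hv ?_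
  refine tendsto_nhds_unique hlim (tendsto_const_nhds.congr' ?_)
  filter_upwards [eventually_ge_atTop t] with s hs
  simp [hempty s hs, leftmost]

/-! ### Measurability -/

lemma measurable_of_dependsOn {ι β : Type*} {π : ι → Type*} [∀ i, MeasurableSpace (π i)]
    [∀ i, Finite (π i)] [∀ i, MeasurableSingletonClass (π i)] [MeasurableSpace β]
    {f : (∀ i, π i) → β} {s : Set ι} (hs : s.Finite) (hf : DependsOn f s) : Measurable f := by
  have : Finite s := hs
  rcases isEmpty_or_nonempty β with hβ | hβ
  · have := Function.isEmpty f
    exact measurable_of_empty f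
  · obtain ⟨g, rfl⟩ := dependsOn_iff_exists_comp.1 hf
    exact (measurable_of_countable g).comp (Set.measurable_restrict s)

lemma measurable_isRecord (x : ℤ) : Measurable fun η : Cfg => isRecord η x := by
  refine .forall fun z => .forall fun _ =>
    measurable_of_dependsOn (Set.finite_Icc z x) fun η η' h => ?_
  have hη : ∀ y ∈ Icc z x, η y = η' y := fun y hy => h y (mem_Icc.1 hy)
  rw [sum_congr rfl fun y hy => congrArg valZ (hη y hy),
    sum_congr rfl fun y hy => congrArg (fun b => 1 - valZ b) (hη y hy)]

lemma measurable_bbsT : Measurable bbsT := by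
  refine measurable_pi_lambda _ fun x => ?_
  exact .ite (measurableSet_setOfPred.2 (measurable_isRecord x)) measurable_const
    ((measurable_of_countable Bool.not).comp (measurable_pi_apply x))

lemma measurable_shiftBy (n : ℤ) : Measurable (shiftBy n) :=
  measurable_pi_lambda _ fun x => measurable_pi_apply (x + n)

lemma dependsOn_excursionWord (y₁ y₂ : ℤ) :
    DependsOn (fun η => excursionWord η y₁ y₂) (Set.Ioo y₁ y₂) := by
  intro η η' h
  simp only [excursionWord_eq_map_range]
  refine List.map_congr_left fun i hi => ?_
  rw [List.mem_range] at hi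
  rw [h _ ⟨by omega, by omega⟩]

lemma measurable_consecutiveRecords (y₁ y₂ : ℤ) :
    Measurable fun η => ConsecutiveRecords η y₁ y₂ := by
  simp_rw [consecutiveRecords_iff]
  exact measurable_const.and ((measurable_isRecord y₁).and ((measurable_isRecord y₂).and
    (.forall fun z => .forall fun _ => .forall fun _ => (measurable_isRecord z).not)))

lemma measurable_mem_Gamma (k : ℕ) (γ : Finset ℤ) : Measurable fun η : Cfg => γ ∈ Gamma η k := by
  simp_rw [mem_Gamma_iff]
  refine .exists fun y₁ => .exists fun y₂ => (measurable_consecutiveRecords y₁ y₂).and ?_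
  exact measurable_of_dependsOn (Set.finite_Ioo y₁ y₂) fun η η' h => by
    rw [show excursionWord η y₁ y₂ = excursionWord η' y₁ y₂ from dependsOn_excursionWord y₁ y₂ h]

lemma measurable_headF_eq (γ δ : Finset ℤ) : Measurable fun η : Cfg => headF η γ = δ :=
  measurable_of_dependsOn γ.finite_toSet fun η η' h => by
    rw [headF, headF, filter_congr fun x hx => by rw [h x hx]]

lemma measurable_tailF_eq (γ δ : Finset ℤ) : Measurable fun η : Cfg => tailF η γ = δ :=
  measurable_of_dependsOn γ.finite_toSet fun η η' h => by
    rw [tailF, tailF, filter_congr fun x hx => by rw [h x hx]]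

lemma measurable_evolves (k t : ℕ) (γ δ : Finset ℤ) :
    Measurable fun η : Cfg => Evolves η k t γ δ := by
  induction t generalizing δ with
  | zero => exact (measurable_mem_Gamma k γ).and measurable_const
  | succ t ih =>
    have hheadtail (δ' : Finset ℤ) :
        Measurable fun η : Cfg => headF (bbsT^[t + 1] η) δ = tailF (bbsT^[t] η) δ' := by
      have hvia : Measurable fun η : Cfg =>
          ∃ ε, tailF (bbsT^[t] η) δ' = ε ∧ headF (bbsT^[t + 1] η) δ = ε :=
        .exists fun ε => ((measurable_tailF_eq δ' ε).comp (measurable_bbsT.iterate t)).and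
          ((measurable_headF_eq δ ε).comp (measurable_bbsT.iterate (t + 1)))
      simpa only [exists_eq_left'] using hvia
    exact .exists fun δ' => (ih δ').and
      (((measurable_mem_Gamma k δ).comp (measurable_bbsT.iterate (t + 1))).and (hheadtail δ'))

lemma measurable_inXlam (lam : ℝ) : Measurable (inXlam lam) := by
  have hvalR (x : ℤ) : Measurable fun η : Cfg => valR (η x) :=
    (measurable_of_countable valR).comp (measurable_pi_apply x)
  exact (measurableSet_setOfPred.1 (measurableSet_tendsto _ fun y =>
    (Finset.measurable_sum _ fun x _ => hvalR x).div_const _)).and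
      (measurableSet_setOfPred.1 (measurableSet_tendsto _ fun y =>
        (Finset.measurable_sum _ fun x _ => hvalR x).div_const _))

/-! ### Records of a configuration of density less than one half -/

lemma cast_xi0_sub (η : Cfg) {z x : ℤ} (h : z ≤ x) :
    (xi0 η x : ℝ) - xi0 η (z - 1) = 2 * ∑ y ∈ Icc z x, valR (η y) - (x - z + 1) := by
  have hcast (b : Bool) : (valZ b : ℝ) = valR b := by cases b <;> simp [valZ, valR]
  have hcard : (#(Icc z x) : ℝ) = x - z + 1 := by
    rw [← Int.cast_natCast, Int.card_Icc_of_le z x (by omega)]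
    push_cast
    ring
  rw [← Int.cast_sub, ← sum_Icc_eq_xi0_sub η h]
  push_cast
  simp only [hcast, sum_sub_distrib, mul_sum, sum_const, nsmul_eq_mul, mul_one, hcard]

lemma tendsto_xi0_atTop {lam : ℝ} (hlam : lam < 1 / 2) {η : Cfg} (h : inXlam lam η) :
    Tendsto (xi0 η) atTop atBot := by
  rw [← Nat.map_cast_int_atTop, tendsto_map'_iff, ← tendsto_intCast_atBot_iff (R := ℝ)]
  have hdrift := tendsto_natCast_atTop_atTop.atTop_mul_neg (by linarith : 2 * lam - 1 < 0)
    ((h.2.const_mul 2).sub_const 1)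
  refine (tendsto_atBot_add_const_right _ (xi0 η (-1) - 1 : ℝ) hdrift).congr' ?_
  filter_upwards [eventually_gt_atTop 0] with y hy
  have hsum := cast_xi0_sub η (Nat.cast_nonneg y : (0 : ℤ) ≤ y)
  push_cast [zero_sub] at hsum
  have hy' : (y : ℝ) ≠ 0 := by positivity
  simp only [Function.comp_apply]
  field_simp
  linarith

lemma tendsto_xi0_atBot {lam : ℝ} (hlam : lam < 1 / 2) {η : Cfg} (h : inXlam lam η) :
    Tendsto (xi0 η) atBot atTop := by
  have hdrift := tendsto_natCast_atTop_atTop.atTop_mul_pos (by linarith : 0 < 1 - 2 * lam)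
    ((h.1.const_mul 2).const_sub 1)
  have hleft : Tendsto (fun y : ℕ => xi0 η (-y - 1)) atTop atTop := by
    rw [← tendsto_intCast_atTop_iff (R := ℝ)]
    refine (tendsto_atTop_add_const_right _ (1 : ℝ) hdrift).congr' ?_
    filter_upwards [eventually_gt_atTop 0] with y hy
    have hsum := cast_xi0_sub η (by omega : -(y : ℤ) ≤ 0)
    have hxi0 : xi0 η 0 = 0 := by simp [xi0]
    rw [hxi0] at hsum
    push_cast at hsum
    have hy' : (y : ℝ) ≠ 0 := by positivity
    field_simp
    linarith
  have hleft' : Tendsto (fun y : ℤ => xi0 η (-y - 1)) atTop atTop := by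
    nth_rewrite 1 [← Nat.map_cast_int_atTop]
    exact tendsto_map'_iff.2 hleft
  have hflip : Tendsto (fun x : ℤ => -x - 1) atBot atTop :=
    tendsto_atTop_add_const_right _ (-1) tendsto_neg_atBot_atTop
  simpa [Function.comp_def] using hleft'.comp hflip

/-- The records of `η` are unbounded in both directions, so that excursions and the position
`rFirst η` of the next record are well defined. -/
structure RecordsUnbounded (η : Cfg) : Prop where
  exists_le : ∀ x, ∃ y ≤ x, isRecord η y
  exists_gt : ∀ x, ∃ y, x < y ∧ isRecord η y

lemma recordsUnbounded_of_tendsto {η : Cfg} (hbot : Tendsto (xi0 η) atBot atTop)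
    (htop : Tendsto (xi0 η) atTop atBot) : RecordsUnbounded η := by
  have hfirst (c : ℤ) : ∃ y, IsLeast {y | xi0 η y ≤ c} y := by
    obtain ⟨b, hb⟩ := eventually_atBot.1 (hbot.eventually_gt_atTop c)
    obtain ⟨y, hy, hmin⟩ := Int.exists_least_of_bdd (P := fun y => xi0 η y ≤ c)
      ⟨b, fun z hz => le_of_not_ge fun hzb => (hb z hzb).not_ge hz⟩
      (htop.eventually_le_atBot c).exists
    exact ⟨y, hy, hmin⟩
  refine ⟨fun x => ?_, fun x => ?_⟩
  · obtain ⟨y, hy⟩ := hfirst (xi0 η x)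
    exact ⟨y, hy.2 (le_refl (xi0 η x)), isRecord_of_isLeast hy⟩
  · obtain ⟨b, hb⟩ := eventually_atBot.1 (hbot.eventually_ge_atTop (xi0 η x))
    obtain ⟨m, hm⟩ := ((Icc b x).image (xi0 η)).bddBelow
    obtain ⟨y, hy⟩ := hfirst (min m (xi0 η x) - 1)
    refine ⟨y, lt_of_not_ge fun hyx => ?_, isRecord_of_isLeast hy⟩
    have hyle : xi0 η y ≤ min m (xi0 η x) - 1 := hy.1
    rcases le_total y b with hyb | hby
    · have := hb y hyb
      omega
    · have := hm (mem_coe.2 (mem_image_of_mem (xi0 η) (mem_Icc.2 ⟨hby, hyx⟩)))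
      omega

lemma inX.recordsUnbounded {η : Cfg} (h : inX η) : RecordsUnbounded η := by
  obtain ⟨lam, -, hlam, hη⟩ := h
  exact recordsUnbounded_of_tendsto (tendsto_xi0_atBot hlam hη) (tendsto_xi0_atTop hlam hη)

namespace RecordsUnbounded

variable {η : Cfg}

lemma exists_isLeast_gt (h : RecordsUnbounded η) (x : ℤ) :
    ∃ y, IsLeast {y | x < y ∧ isRecord η y} y := by
  obtain ⟨y, hy, hmin⟩ := Int.exists_least_of_bdd ⟨x, fun z hz => hz.1.le⟩ (h.exists_gt x)
  exact ⟨y, hy, hmin⟩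

lemma exists_isGreatest_le (h : RecordsUnbounded η) (x : ℤ) :
    ∃ y, IsGreatest {y | y ≤ x ∧ isRecord η y} y := by
  obtain ⟨y, hy, hmax⟩ := Int.exists_greatest_of_bdd ⟨x, fun z hz => hz.1⟩ (h.exists_le x)
  exact ⟨y, hy, hmax⟩

lemma exists_consecutiveRecords (h : RecordsUnbounded η) (x : ℤ) :
    ∃ y₁ y₂, ConsecutiveRecords η y₁ y₂ ∧ y₁ ≤ x ∧ x < y₂ := by
  obtain ⟨y₁, ⟨hle, h₁⟩, hmax⟩ := h.exists_isGreatest_le x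
  obtain ⟨y₂, ⟨hlt, h₂⟩, hmin⟩ := h.exists_isLeast_gt x
  refine ⟨y₁, y₂, ⟨hle.trans_lt hlt, h₁, h₂, fun z hz₁ hz₂ hz => ?_⟩, hle, hlt⟩
  rcases le_or_gt z x with hzx | hxz
  · exact hz₁.not_ge (hmax ⟨hzx, hz⟩)
  · exact hz₂.not_ge (hmin ⟨hxz, hz⟩)

lemma isLeast_rFirst (h : RecordsUnbounded η) : IsLeast {x | 0 < x ∧ isRecord η x} (rFirst η) := by
  obtain ⟨y, hy⟩ := h.exists_isLeast_gt 0
  have hy' : rFirst η = y := hy.csInf_eq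
  rwa [hy']

lemma consecutiveRecords_rFirst (h : RecordsUnbounded η) (h₀ : isRecord η 0) :
    ConsecutiveRecords η 0 (rFirst η) :=
  ⟨h.isLeast_rFirst.1.1, h₀, h.isLeast_rFirst.1.2,
    fun _ hz hz' hrec => hz'.not_ge (h.isLeast_rFirst.2 ⟨hz, hrec⟩)⟩

end RecordsUnbounded

/-! ### Mass transport -/

section MassTransport

variable {Ω ι G : Type*} [MeasurableSpace Ω] {μ : Measure Ω}

lemma lintegral_encard [Countable ι] {F : Ω → ι → Prop} (hF : ∀ i, Measurable fun ω => F ω i) :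
    ∫⁻ ω, {i | F ω i}.encard ∂μ = ∑' i, μ {ω | F ω i} := by
  have hterm (ω : Ω) : (({i | F ω i}.encard : ℕ∞) : ENNReal) =
      ∑' i, {ω | F ω i}.indicator 1 ω := by
    rw [← ENNReal.tsum_set_one, _root_.tsum_subtype _ fun _ => (1 : ENNReal)]
    rfl
  have hmeas (i : ι) : MeasurableSet {ω | F ω i} := measurableSet_setOfPred.2 (hF i)
  simp_rw [hterm]
  rw [lintegral_tsum fun i => (measurable_one.indicator (hmeas i)).aemeasurable]
  exact tsum_congr fun i => lintegral_indicator_one (hmeas i)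

lemma measurable_encard_setOf [Countable ι] {F : Ω → ι → Prop}
    (hF : ∀ i, Measurable fun ω => F ω i) :
    Measurable fun ω => (({i | F ω i}.encard : ℕ∞) : ENNReal) :=
  measurable_from_top.comp (measurable_encard.comp (measurable_set_iff.2 hF))

lemma lintegral_encard_of_subsingleton {F : Ω → ι → Prop}
    (hF : Measurable fun ω => ∃ i, F ω i) (hsub : ∀ ω, {i | F ω i}.Subsingleton) :
    ∫⁻ ω, {i | F ω i}.encard ∂μ = μ {ω | ∃ i, F ω i} := by
  rw [← lintegral_indicator_one (measurableSet_setOfPred.2 hF)]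
  refine lintegral_congr fun ω => ?_
  by_cases hω : {i | F ω i}.Nonempty
  · obtain ⟨i, hi⟩ := Set.exists_eq_singleton_iff_nonempty_subsingleton.2 ⟨hω, hsub ω⟩
    rw [Set.indicator_of_mem (by exact hω), hi, Set.encard_singleton,
      ENat.toENNReal_one, Pi.one_apply]
  · rw [Set.indicator_of_notMem (by exact hω), Set.not_nonempty_iff_eq_empty.1 hω,
      Set.encard_empty, ENat.toENNReal_zero]

lemma mass_transport [AddGroup G] [Countable G] {θ : G → Ω → Ω}
    (hθ : ∀ g, MeasurePreserving (θ g) μ μ) {F : Ω → G → G → Prop}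
    (hF : ∀ x y, Measurable fun ω => F ω x y)
    (hinv : ∀ g ω x y, F (θ g ω) x y ↔ F ω (g + x) (g + y)) :
    ∫⁻ ω, {y | F ω 0 y}.encard ∂μ = ∫⁻ ω, {x | F ω x 0}.encard ∂μ := by
  rw [lintegral_encard (hF 0), lintegral_encard fun x => hF x 0, ← (Equiv.neg G).tsum_eq]
  refine tsum_congr fun g => ?_
  have hpre := (hθ (-g)).measure_preimage
    (measurableSet_setOfPred.2 (hF g 0)).nullMeasurableSet
  simpa [Set.preimage_ofPred_eq, hinv] using hpre

end MassTransport

lemma measurePreserving_shiftBy {mu : Measure Cfg} (h : MeasurePreserving shiftC mu mu) (n : ℤ) :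
    MeasurePreserving (shiftBy n) mu mu := by
  have hnat (m : ℕ) : MeasurePreserving (shiftBy m) mu mu := by
    convert h.iterate m using 1
    induction m with
    | zero => funext η x; simp [shiftBy]
    | succ m ih =>
      rw [Function.iterate_succ', ← ih]
      funext η x
      simp [shiftBy, shiftC, add_assoc, add_comm (1 : ℤ)]
  have hinv (m : ℤ) : shiftBy (-m) ∘ shiftBy m = id := by
    funext η x
    simp [shiftBy]
  obtain ⟨m, rfl | rfl⟩ := n.eq_nat_or_neg
  · exact hnat m
  · refine ⟨measurable_shiftBy _, ?_⟩
    conv_lhs => rw [← (hnat m).map_eq]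
    rw [Measure.map_map (measurable_shiftBy _) (measurable_shiftBy _), hinv, Measure.map_id]

/-! ### Densities of records and of solitons -/

/-- The probability that the origin is a record, that is, the mean number of records per site. -/
noncomputable def recordDensity (mu : Measure Cfg) : ENNReal := mu {η | isRecord η 0}

/-- The probability that the origin is the leftmost site of a `k`-soliton, that is, the mean
number `ρ̄_k` of `k`-solitons per site. -/
noncomputable def solitonDensity (mu : Measure Cfg) (k : ℕ) : ENNReal :=
  mu {η | ∃ γ ∈ Gamma η k, leftmost γ = 0}

lemma measurable_exists_mem_Gamma (k : ℕ) {p : Cfg → Finset ℤ → Prop}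
    (hp : ∀ γ, Measurable fun η => p η γ) : Measurable fun η => ∃ γ ∈ Gamma η k, p η γ :=
  .exists fun γ => (measurable_mem_Gamma k γ).and (hp γ)

open scoped Pointwise in
lemma exists_mem_Gamma_shiftBy {n : ℤ} {η : Cfg} {k : ℕ} {p q : Finset ℤ → Prop}
    (h : ∀ γ : Finset ℤ, γ.Nonempty → (p γ ↔ q (n +ᵥ γ))) :
    (∃ γ ∈ Gamma (shiftBy n η) k, p γ) ↔ ∃ γ ∈ Gamma η k, q γ := by
  refine (AddAction.toPerm n).exists_congr fun γ => ?_
  rw [AddAction.toPerm_apply, mem_Gamma_shiftBy]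
  exact and_congr_right fun hγ => h γ (vadd_finset_nonempty.1 (nonempty_of_mem_Gamma hγ))

lemma injOn_leftmost (η : Cfg) (k : ℕ) : Set.InjOn leftmost (Gamma η k) := by
  intro γ hγ γ' hγ' h
  have hmem := leftmost_mem (nonempty_of_mem_Gamma hγ)
  exact Gamma_eq_of_mem_of_mem hγ hγ' hmem (h ▸ leftmost_mem (nonempty_of_mem_Gamma hγ'))

lemma encard_sites_soliton (η : Cfg) (k : ℕ) (x : ℤ) :
    (({y | ∃ γ ∈ Gamma η k, leftmost γ = x ∧ y ∈ γ}.encard : ℕ∞) : ENNReal) =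
      {η | ∃ γ ∈ Gamma η k, leftmost γ = x}.indicator (fun _ => (2 * k : ENNReal)) η := by
  by_cases h : ∃ γ ∈ Gamma η k, leftmost γ = x
  · obtain ⟨γ, hγ, rfl⟩ := h
    have hset : {y | ∃ γ' ∈ Gamma η k, leftmost γ' = leftmost γ ∧ y ∈ γ'} = γ := by
      ext y
      refine ⟨fun ⟨γ', hγ', h, hy⟩ => ?_, fun hy => ⟨γ, hγ, rfl, hy⟩⟩
      rwa [← injOn_leftmost η k hγ' hγ h]
    rw [Set.indicator_of_mem (by exact ⟨γ, hγ, rfl⟩), hset, Set.encard_coe_eq_coe_finsetCard,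
      card_of_mem_Gamma hγ]
    simp
  · have hset : {y | ∃ γ ∈ Gamma η k, leftmost γ = x ∧ y ∈ γ} = ∅ :=
      Set.eq_empty_of_forall_notMem fun y ⟨γ, hγ, hx, _⟩ => h ⟨γ, hγ, hx⟩
    rw [Set.indicator_of_notMem (by exact h), hset, Set.encard_empty,
      ENat.toENNReal_zero]

open scoped Pointwise in
/-- A `k`-soliton sends unit mass from its leftmost site to each of its `2k` sites. -/
lemma measure_exists_soliton_mem {mu : Measure Cfg} (hshift : MeasurePreserving shiftC mu mu)
    (k : ℕ) : mu {η | ∃ γ ∈ Gamma η k, 0 ∈ γ} = 2 * k * solitonDensity mu k := by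
  let F : Cfg → ℤ → ℤ → Prop := fun η x y => ∃ γ ∈ Gamma η k, leftmost γ = x ∧ y ∈ γ
  have hF (x y : ℤ) : Measurable fun η => F η x y :=
    measurable_exists_mem_Gamma k fun γ => measurable_const
  have hinv (n : ℤ) (η : Cfg) (x y : ℤ) : F (shiftBy n η) x y ↔ F η (n + x) (n + y) :=
    exists_mem_Gamma_shiftBy fun γ hγ => by
      simp [leftmost_vadd hγ, ← vadd_eq_add, Finset.vadd_mem_vadd_finset_iff]
  have hsub (η : Cfg) : {x | F η x 0}.Subsingleton := by
    rintro _ ⟨γ, hγ, rfl, h⟩ _ ⟨γ', hγ', rfl, h'⟩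
    rw [Gamma_eq_of_mem_of_mem hγ hγ' h h']
  have hexists (η : Cfg) : (∃ γ ∈ Gamma η k, 0 ∈ γ) ↔ ∃ x, F η x 0 :=
    ⟨fun ⟨γ, hγ, h⟩ => ⟨_, γ, hγ, rfl, h⟩, fun ⟨_, γ, hγ, _, h⟩ => ⟨γ, hγ, h⟩⟩
  calc mu {η | ∃ γ ∈ Gamma η k, 0 ∈ γ} = mu {η | ∃ x, F η x 0} := by simp_rw [hexists]
    _ = ∫⁻ η, {x | F η x 0}.encard ∂mu :=
        (lintegral_encard_of_subsingleton (.exists fun x => hF x 0) hsub).symm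
    _ = ∫⁻ η, {y | F η 0 y}.encard ∂mu :=
        (mass_transport (measurePreserving_shiftBy hshift) hF hinv).symm
    _ = 2 * k * solitonDensity mu k := by
        simp_rw [F, encard_sites_soliton]
        refine lintegral_indicator_const (measurableSet_setOfPred.2 ?_) _
        exact (measurable_exists_mem_Gamma k fun _ => measurable_const)

lemma recordDensity_add_tsum {mu : Measure Cfg} (hshift : MeasurePreserving shiftC mu mu)
    (hrec : ∀ᵐ η ∂mu, RecordsUnbounded η) :
    recordDensity mu + ∑' k : ℕ, 2 * k * solitonDensity mu k = mu Set.univ := by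
  have hmeas (k : ℕ) : MeasurableSet {η : Cfg | ∃ γ ∈ Gamma η k, 0 ∈ γ} :=
    measurableSet_setOfPred.2 (measurable_exists_mem_Gamma k fun γ => measurable_const)
  simp_rw [← measure_exists_soliton_mem hshift]
  rw [← measure_iUnion _ hmeas, recordDensity, ← measure_union _ (.iUnion hmeas)]
  · refine measure_congr (eventuallyEq_univ.2 ?_)
    filter_upwards [hrec] with η hη
    by_cases h : isRecord η 0
    · exact .inl h
    · obtain ⟨y₁, y₂, hcons, hle, hlt⟩ := hη.exists_consecutiveRecords 0
      have hne : y₁ ≠ 0 := fun h₀ => h (h₀ ▸ hcons.left)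
      obtain ⟨k, γ, hγ, hmem⟩ := hcons.exists_mem_Gamma (lt_of_le_of_ne hle hne) hlt
      exact .inr (Set.mem_iUnion.2 ⟨k, γ, hγ, hmem⟩)
  · refine Set.disjoint_left.2 fun η h hη => ?_
    obtain ⟨k, γ, hγ, hmem⟩ := Set.mem_iUnion.1 hη
    obtain ⟨y₁, y₂, hcons, hrange⟩ := exists_consecutiveRecords_of_mem_Gamma hγ
    exact hcons.not_isRecord 0 (hrange 0 hmem).1 (hrange 0 hmem).2 h
  · intro k k' hne
    refine Set.disjoint_left.2 fun η ⟨γ, hγ, hmem⟩ ⟨γ', hγ', hmem'⟩ => hne ?_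
    exact Gamma_size_eq_of_mem_of_mem hγ hγ' hmem hmem'

/-- `HostsSoliton η k r x`: `x` is the leftmost site of a `k`-soliton of `η` belonging to the
excursion that starts at the record `r`. -/
def HostsSoliton (η : Cfg) (k : ℕ) (r x : ℤ) : Prop :=
  (∃ y, ConsecutiveRecords η r y ∧ r < x ∧ x < y) ∧ ∃ γ ∈ Gamma η k, leftmost γ = x

lemma measurable_hostsSoliton (k : ℕ) (r x : ℤ) : Measurable fun η => HostsSoliton η k r x :=
  .and (.exists fun y => (measurable_consecutiveRecords r y).and measurable_const)
    (measurable_exists_mem_Gamma k fun _ => measurable_const)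

lemma hostsSoliton_shiftBy {n : ℤ} {η : Cfg} {k : ℕ} {r x : ℤ} :
    HostsSoliton (shiftBy n η) k r x ↔ HostsSoliton η k (n + r) (n + x) := by
  refine and_congr ((Equiv.addLeft n).exists_congr fun y => ?_)
    (exists_mem_Gamma_shiftBy fun γ hγ => ?_)
  · simp [consecutiveRecords_shiftBy]
  · simp [leftmost_vadd hγ]

lemma exists_hostsSoliton_iff {η : Cfg} {k : ℕ} {x : ℤ} :
    (∃ r, HostsSoliton η k r x) ↔ ∃ γ ∈ Gamma η k, leftmost γ = x := by
  refine ⟨fun ⟨_, _, h⟩ => h, fun ⟨γ, hγ, h⟩ => ?_⟩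
  obtain ⟨r, y, hcons, hrange⟩ := exists_consecutiveRecords_of_mem_Gamma hγ
  exact ⟨r, ⟨y, hcons, h ▸ hrange _ (leftmost_mem (nonempty_of_mem_Gamma hγ))⟩, γ, hγ, h⟩

lemma subsingleton_hostsSoliton (η : Cfg) (k : ℕ) (x : ℤ) :
    {r | HostsSoliton η k r x}.Subsingleton := by
  rintro r ⟨⟨y, hcons, hlt, hlt'⟩, -⟩ r' ⟨⟨y', hcons', h, h'⟩, -⟩
  obtain ⟨heq, -⟩ | hle | hle := hcons.eq_or_le_or_le hcons'
  · exact heq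
  all_goals omega

lemma RecordsUnbounded.encard_hostsSoliton {η : Cfg} (hη : RecordsUnbounded η)
    (h₀ : isRecord η 0) (k : ℕ) :
    {x | HostsSoliton η k 0 x}.encard = excCount η k := by
  have hcons := hη.consecutiveRecords_rFirst h₀
  have himage : {x | HostsSoliton η k 0 x} =
      leftmost '' {γ | γ ∈ Gamma η k ∧ ∀ x ∈ γ, 0 < x ∧ x < rFirst η} := by
    ext x
    constructor
    · rintro ⟨⟨y, hy, hlt, hlt'⟩, γ, hγ, rfl⟩
      obtain ⟨y₁, y₂, hcons', hrange⟩ := exists_consecutiveRecords_of_mem_Gamma hγ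
      have hleft := hrange _ (leftmost_mem (nonempty_of_mem_Gamma hγ))
      refine ⟨γ, ⟨hγ, ?_⟩, rfl⟩
      obtain ⟨rfl, rfl⟩ | hle | hle := hy.eq_or_le_or_le hcons'
      · obtain ⟨-, rfl⟩ | hle | hle := hy.eq_or_le_or_le hcons
        · exact hrange
        · exact absurd hy.lt hle.not_gt
        · exact absurd hcons.lt hle.not_gt
      all_goals omega
    · rintro ⟨γ, ⟨hγ, hrange⟩, rfl⟩
      exact ⟨⟨_, hcons, hrange _ (leftmost_mem (nonempty_of_mem_Gamma hγ))⟩, γ, hγ, rfl⟩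
  have hfin : {x | HostsSoliton η k 0 x}.Finite := by
    rw [himage]
    refine (Set.finite_Ioo 0 (rFirst η)).subset ?_
    rintro _ ⟨γ, ⟨hγ, hrange⟩, rfl⟩
    exact hrange _ (leftmost_mem (nonempty_of_mem_Gamma hγ))
  rw [← hfin.cast_ncard_eq, himage, ((injOn_leftmost η k).mono fun γ hγ => hγ.1).ncard_image]
  rfl

lemma lintegral_excCount {mu : Measure Cfg} (hshift : MeasurePreserving shiftC mu mu)
    (hrec : ∀ᵐ η ∂mu, RecordsUnbounded η) (k : ℕ) :
    ∫⁻ η in {η | isRecord η 0}, excCount η k ∂mu = solitonDensity mu k := by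
  have hmeas : MeasurableSet {η | isRecord η 0} := measurableSet_setOfPred.2 (measurable_isRecord 0)
  have hcount : ∀ᵐ η ∂mu, {η | isRecord η 0}.indicator (fun η => (excCount η k : ENNReal)) η =
      {x | HostsSoliton η k 0 x}.encard := by
    filter_upwards [hrec] with η hη
    by_cases h₀ : isRecord η 0
    · rw [Set.indicator_of_mem (by exact h₀), hη.encard_hostsSoliton h₀, ENat.toENNReal_coe]
    · have hempty : {x | HostsSoliton η k 0 x} = ∅ :=
        Set.eq_empty_of_forall_notMem fun x ⟨⟨y, hcons, _⟩, _⟩ => h₀ hcons.left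
      rw [Set.indicator_of_notMem (by exact h₀), hempty, Set.encard_empty, ENat.toENNReal_zero]
  calc ∫⁻ η in {η | isRecord η 0}, excCount η k ∂mu
      = ∫⁻ η, {x | HostsSoliton η k 0 x}.encard ∂mu := by
        rw [← lintegral_indicator hmeas, lintegral_congr_ae hcount]
    _ = ∫⁻ η, {r | HostsSoliton η k r 0}.encard ∂mu :=
        mass_transport (measurePreserving_shiftBy hshift) (measurable_hostsSoliton k)
          fun n η x y => hostsSoliton_shiftBy
    _ = mu {η | ∃ r, HostsSoliton η k r 0} :=
        lintegral_encard_of_subsingleton (.exists fun r => measurable_hostsSoliton k r 0)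
          fun η => subsingleton_hostsSoliton η k 0
    _ = solitonDensity mu k := by simp_rw [exists_hostsSoliton_iff]; rfl

lemma aemeasurable_excCount {mu : Measure Cfg} (hrec : ∀ᵐ η ∂mu, RecordsUnbounded η) (k : ℕ) :
    AEMeasurable (fun η => (excCount η k : ENNReal)) (mu.restrict {η | isRecord η 0}) := by
  refine (measurable_encard_setOf (measurable_hostsSoliton k 0)).aemeasurable.congr ?_
  filter_upwards [ae_restrict_of_ae hrec,
    ae_restrict_mem (measurableSet_setOfPred.2 (measurable_isRecord 0))] with η hη h₀
  rw [hη.encard_hostsSoliton h₀, ENat.toENNReal_coe]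

section Densities

variable {mu : Measure Cfg} {k : ℕ}

lemma rhoK_eq_div (hshift : MeasurePreserving shiftC mu mu) (hX : ∀ᵐ η ∂mu, inX η) (k : ℕ) :
    rhoK mu k = (solitonDensity mu k).toReal / (recordDensity mu).toReal := by
  have hrec := hX.mono fun η => inX.recordsUnbounded
  have hset : XhatSet =ᵐ[mu] {η | isRecord η 0} := by
    filter_upwards [hX] with η hη
    exact propext (and_iff_right hη)
  rw [rhoK, ProbabilityTheory.cond, Measure.restrict_congr_set hset, measure_congr hset,
    integral_smul_measure]
  simp_rw [← ENNReal.toReal_natCast (excCount _ k)]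
  rw [integral_toReal (aemeasurable_excCount hrec k) (by simp), lintegral_excCount hshift hrec,
    ENNReal.toReal_inv, smul_eq_mul, inv_mul_eq_div, recordDensity]

variable [IsFiniteMeasure mu]

lemma w0of_eq_div (hshift : MeasurePreserving shiftC mu mu) (hX : ∀ᵐ η ∂mu, inX η)
    (hpos : 0 < (recordDensity mu).toReal) :
    w0of mu = (mu Set.univ).toReal / (recordDensity mu).toReal := by
  have htotal := recordDensity_add_tsum hshift (hX.mono fun η => inX.recordsUnbounded)
  have htop : ∑' k : ℕ, 2 * k * solitonDensity mu k ≠ ⊤ :=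
    ne_top_of_le_ne_top (measure_ne_top mu Set.univ) (htotal ▸ le_add_self)
  have hsum := ENNReal.tsum_toReal_eq (ENNReal.ne_top_of_tsum_ne_top htop)
  simp only [ENNReal.toReal_mul, ENNReal.toReal_ofNat, ENNReal.toReal_natCast] at hsum
  have hrecord : recordDensity mu ≠ ⊤ := measure_ne_top mu _
  rw [← htotal, ENNReal.toReal_add hrecord htop, hsum, w0of, add_div, div_self hpos.ne',
    ← tsum_div_const]
  simp_rw [rhoK_eq_div hshift hX, mul_div_assoc]

lemma w0of_div_rhoK (hshift : MeasurePreserving shiftC mu mu) (hX : ∀ᵐ η ∂mu, inX η)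
    (hρ : 0 < rhoK mu k) :
    0 < (solitonDensity mu k).toReal ∧
      w0of mu / rhoK mu k = (mu Set.univ).toReal / (solitonDensity mu k).toReal := by
  rw [rhoK_eq_div hshift hX] at hρ ⊢
  obtain ⟨hsol, hrecord⟩ : 0 < (solitonDensity mu k).toReal ∧ 0 < (recordDensity mu).toReal := by
    refine (div_pos_iff.1 hρ).resolve_right fun h => h.1.not_ge ENNReal.toReal_nonneg
  refine ⟨hsol, ?_⟩
  rw [w0of_eq_div hshift hX hrecord, div_div_div_cancel_right₀ hrecord.ne']

end Densities

/-! ### The flux of solitons through the origin -/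

/-- `Advances η k N L x`: a `k`-soliton of `η` with leftmost site `x` has moved by at least `L`
sites by time `N`. -/
def Advances (η : Cfg) (k N : ℕ) (L x : ℤ) : Prop :=
  ∃ γ δ, Evolves η k N γ δ ∧ leftmost γ = x ∧ x + L ≤ leftmost δ

lemma measurable_advances (k N : ℕ) (L x : ℤ) : Measurable fun η => Advances η k N L x :=
  .exists fun γ => .exists fun δ => (measurable_evolves k N γ δ).and measurable_const

open scoped Pointwise in
lemma advances_shiftBy {n : ℤ} {η : Cfg} {k N : ℕ} {L x : ℤ} :
    Advances (shiftBy n η) k N L x ↔ Advances η k N L (n + x) := by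
  refine (AddAction.toPerm n).exists_congr fun γ => (AddAction.toPerm n).exists_congr fun δ => ?_
  rw [AddAction.toPerm_apply, AddAction.toPerm_apply, evolves_shiftBy]
  refine and_congr_right fun h => ?_
  have hγ := vadd_finset_nonempty.1 (nonempty_of_mem_Gamma h.mem_left)
  have hδ := vadd_finset_nonempty.1 (nonempty_of_mem_Gamma h.mem_right)
  simp [leftmost_vadd hγ, leftmost_vadd hδ, add_assoc]

section Flux

variable {mu : Measure Cfg} {k : ℕ}

lemma measure_advances (hshift : MeasurePreserving shiftC mu mu) (k N : ℕ) (L x : ℤ) :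
    mu {η | Advances η k N L x} = mu {η | Advances η k N L 0} := by
  have hpre := (measurePreserving_shiftBy hshift x).measure_preimage
    (measurableSet_setOfPred.2 (measurable_advances k N L 0)).nullMeasurableSet
  simpa [Set.preimage_ofPred_eq, advances_shiftBy] using hpre

open Classical in
/-- Solitons starting in `[-L, 0)` and advancing by `L` cross the origin. -/
lemma card_advances_le (η : Cfg) (k N L : ℕ) :
    #{x ∈ Ico (-(L : ℤ)) 0 | Advances η k N L x} ≤ N := by
  refine card_le_of_forall_crossing (η := η) (k := k) fun x hx => ?_
  rw [mem_filter, mem_Ico] at hx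
  obtain ⟨⟨hge, hneg⟩, γ, δ, h, hleft, hle⟩ := hx
  exact ⟨γ, δ, h, hleft, hneg, by omega⟩

lemma mul_measure_advances_le (hshift : MeasurePreserving shiftC mu mu) (k N L : ℕ) :
    L * mu {η | Advances η k N L 0} ≤ N * mu Set.univ := by
  classical
  have hmeas (x : ℤ) : MeasurableSet {η | Advances η k N L x} :=
    measurableSet_setOfPred.2 (measurable_advances k N L x)
  calc L * mu {η | Advances η k N L 0}
      = ∑ x ∈ Ico (-(L : ℤ)) 0, mu {η | Advances η k N L x} := by
        simp [measure_advances hshift]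
    _ = ∫⁻ η, ∑ x ∈ Ico (-(L : ℤ)) 0, {η | Advances η k N L x}.indicator 1 η ∂mu := by
        rw [lintegral_finsetSum _ fun x _ => measurable_one.indicator (hmeas x)]
        exact sum_congr rfl fun x _ => (lintegral_indicator_one (hmeas x)).symm
    _ = ∫⁻ η, #{x ∈ Ico (-(L : ℤ)) 0 | Advances η k N L x} ∂mu := by
        simp [Set.indicator_apply]
    _ ≤ ∫⁻ _, N ∂mu := lintegral_mono fun η => Nat.cast_le.2 (card_advances_le η k N L)
    _ = N * mu Set.univ := lintegral_const _

variable [IsFiniteMeasure mu] {v c : ℝ}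

lemma tendsto_measure_advances (hv : v ≠ 0) (hcv : c < v)
    (hlim : ∀ᵐ η ∂mu, ∀ γ ∈ Gamma η k,
      Tendsto (fun t : ℕ => (leftmost (solTraj η k γ t) : ℝ) / t) atTop (nhds v)) :
    Tendsto (fun N : ℕ => mu {η | Advances η k N ⌊c * N⌋ 0}) atTop
      (nhds (solitonDensity mu k)) := by
  refine tendsto_measure_of_ae_tendsto_indicator_of_isFiniteMeasure atTop
    (measurableSet_setOfPred.2 (measurable_exists_mem_Gamma k fun _ => measurable_const))
    (fun N => measurableSet_setOfPred.2 (measurable_advances k N _ 0)) ?_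
  filter_upwards [hlim] with η hη
  by_cases hsol : ∃ γ ∈ Gamma η k, leftmost γ = 0
  · obtain ⟨γ, hγ, h₀⟩ := hsol
    filter_upwards [(hη γ hγ).eventually (lt_mem_nhds hcv), eventually_gt_atTop 0] with N hN hpos
    refine iff_of_true ⟨γ, _, evolves_solTraj_of_tendsto hγ hv (hη γ hγ) N, h₀, ?_⟩ ⟨γ, hγ, h₀⟩
    have hlt : c * N < leftmost (solTraj η k γ N) := (lt_div_iff₀ (by exact_mod_cast hpos)).1 hN
    rw [zero_add]
    exact_mod_cast (Int.floor_le _).trans hlt.le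
  · exact .of_forall fun N => iff_of_false (fun ⟨γ, _, h, h₀, _⟩ => hsol ⟨γ, h.mem_left, h₀⟩) hsol

lemma mul_solitonDensity_le (hshift : MeasurePreserving shiftC mu mu) (hc : 0 < c) (hcv : c < v)
    (hlim : ∀ᵐ η ∂mu, ∀ γ ∈ Gamma η k,
      Tendsto (fun t : ℕ => (leftmost (solTraj η k γ t) : ℝ) / t) atTop (nhds v)) :
    c * (solitonDensity mu k).toReal ≤ (mu Set.univ).toReal := by
  have hfloor : Tendsto (fun N : ℕ => (⌊c * N⌋₊ : ℝ) / N) atTop (nhds c) :=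
    (tendsto_nat_floor_mul_div_atTop hc.le).comp tendsto_natCast_atTop_atTop
  have hmeas := (ENNReal.tendsto_toReal (measure_ne_top mu _)).comp
    (tendsto_measure_advances (hc.trans hcv).ne' hcv hlim)
  refine le_of_tendsto (hfloor.mul hmeas) ?_
  filter_upwards [eventually_gt_atTop 0] with N hN
  have hflux := ENNReal.toReal_mono (by finiteness) (mul_measure_advances_le hshift k N ⌊c * N⌋₊)
  rw [Int.natCast_floor_eq_floor (by positivity)] at hflux
  simp only [ENNReal.toReal_mul, ENNReal.toReal_natCast] at hflux
  rwa [Function.comp_apply, div_mul_eq_mul_div, div_le_iff₀' (by exact_mod_cast hN)]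

end Flux

theorem soliton_speed_bound_general {mu : Measure Cfg} [IsFiniteMeasure mu]
    (hshift : MeasurePreserving shiftC mu mu) (hX : ∀ᵐ η ∂mu, inX η) {k : ℕ} {v : ℝ}
    (hv : ∀ᵐ η ∂mu, ∀ γ ∈ Gamma η k,
      Tendsto (fun t : ℕ => (leftmost (solTraj η k γ t) : ℝ) / (t : ℝ)) atTop (nhds v))
    (hρ : 0 < rhoK mu k) : v ≤ w0of mu / rhoK mu k := by
  obtain ⟨hpos, hratio⟩ := w0of_div_rhoK hshift hX hρ
  rw [hratio]
  refine le_of_forall_lt_imp_le_of_dense fun c hc => ?_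
  rcases le_or_gt c 0 with hc₀ | hc₀
  · exact hc₀.trans (by positivity)
  · exact (le_div_iff₀ hpos).2 (mul_solitonDensity_le hshift hc₀ hc hv)

open MeasureTheory Filter in
/-- **finiteness bound for speeds.** Let `μ` be a `T`-invariant,
shift-ergodic probability measure on `𝒳_λ`, `0 < λ < 1/2`, and let `(v_k)` be
the deterministic asymptotic speeds of tagged `k`-solitons,
`v_k = lim_t x(γ^t)/t` `μ`-a.s.  Then for every `k ≥ 1` with `ρ_k > 0`,
`v_k ≤ w_0 / ρ_k`; in particular each such `v_k` is finite. -/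
theorem soliton_speed_bound (lam : ℝ) (h0 : 0 < lam) (h1 : lam < 1 / 2)
    (mu : Measure Cfg) [IsProbabilityMeasure mu]
    (hsupp : mu {η : Cfg | inXlam lam η} = 1)
    (hT : mu.map bbsT = mu) (herg : Ergodic shiftC mu) (v : ℕ → ℝ)
    (hv : ∀ᵐ η ∂mu, ∀ k : ℕ, 1 ≤ k → ∀ γ ∈ Gamma η k,
      Tendsto (fun t : ℕ => (leftmost (solTraj η k γ t) : ℝ) / (t : ℝ))
        atTop (nhds (v k))) :
    ∀ k : ℕ, 1 ≤ k → 0 < rhoK mu k → v k ≤ w0of mu / rhoK mu k := by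
  intro k hk hρ
  rw [← measure_univ (μ := mu)] at hsupp
  have hlam := (ae_iff_measure_eq
    (measurableSet_setOfPred.2 (measurable_inXlam lam)).nullMeasurableSet).2 hsupp
  exact soliton_speed_bound_general herg.toMeasurePreserving
    (hlam.mono fun η hη => ⟨lam, h0, h1, hη⟩) (hv.mono fun η hη => hη k hk) hρ
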